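/- Let v be a non-constant harmonic function on the open unit ball B₁ ⊂ ℝⁿ with Z(v) ∩ B_{1/2} ≠ ∅, and set Z = Z(v). Then there exist constants M = M(Z) > 0 and c = c(Z) > 0 such that for every harmonic function u on B₁ with Z(u) = Z, sup_{x ∈ B_{1/16}} |u(x)| ≤ M · sup { |u(y)| : y ∈ B_{1/2}, dist(y, Z) ≥ c }. -/

import Mathlib

open Metric Set Filter

noncomputable section

abbrev En (n : ℕ) : Type := EuclideanSpace ℝ (Fin n)

/-- The Laplacian of `u` at `x`, computed from the second iterated Fréchet derivative. -/
def laplacianAt {n : ℕ} (u : En n → ℝ) (x : En n) : ℝ :=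
  ∑ i : Fin n, iteratedFDeriv ℝ 2 u x ![EuclideanSpace.single i 1, EuclideanSpace.single i 1]

/-- `u` is harmonic on `Ω`: twice continuously differentiable with vanishing Laplacian. -/
def HarmonicOnSet {n : ℕ} (u : En n → ℝ) (Ω : Set (En n)) : Prop :=
  ContDiffOn ℝ 2 u Ω ∧ ∀ x ∈ Ω, laplacianAt u x = 0

/-- The zero set of `u` within `Ω`. -/
def zeroSet {n : ℕ} (u : En n → ℝ) (Ω : Set (En n)) : Set (En n) :=
  {x ∈ Ω | u x = 0}

/-- The collection of nodal domains of `u` in `Ω`, i.e. the connected components of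
`Ω \ Z(u)`. -/
def nodalComponents {n : ℕ} (u : En n → ℝ) (Ω : Set (En n)) : Set (Set (En n)) :=
  {C | ∃ x ∈ Ω \ zeroSet u Ω, C = connectedComponentIn (Ω \ zeroSet u Ω) x}

/-- Positive-part powers `(s₊)^(k+2)` are differentiable. -/
lemma hasDerivAt_posPart_pow (k : ℕ) (s : ℝ) :
    HasDerivAt (fun s : ℝ => max s 0 ^ (k + 2)) ((k + 2 : ℝ) * max s 0 ^ (k + 1)) s := by
  rcases lt_trichotomy s 0 with h | h | h
  · have h1 : (fun s : ℝ => max s 0 ^ (k + 2)) =ᶠ[nhds s] fun _ => 0 := by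
      filter_upwards [eventually_lt_nhds h] with t ht
      simp [max_eq_right ht.le]
    have := (hasDerivAt_const s (0 : ℝ)).congr_of_eventuallyEq h1
    simpa [max_eq_right h.le] using this
  · subst h
    rw [hasDerivAt_iff_isLittleO]
    simp only [max_self, sub_zero, ne_eq, Nat.add_eq_zero_iff, OfNat.ofNat_ne_zero, and_false,
      not_false_eq_true, zero_pow, one_ne_zero, mul_zero, smul_zero]
    have h2 : (fun x : ℝ => max x 0 ^ (k + 2)) =O[nhds 0] fun x : ℝ => x ^ (k + 2) := by
      refine Asymptotics.IsBigO.of_bound 1 (Eventually.of_forall fun x => ?_)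
      rw [one_mul, norm_pow, norm_pow]
      refine pow_le_pow_left₀ (norm_nonneg _) ?_ _
      rcases le_total x 0 with hx | hx <;> simp [hx]
    refine h2.trans_isLittleO ?_
    exact (Asymptotics.isLittleO_pow_id (by omega : 1 < k + 2))
  · have h1 : (fun s : ℝ => max s 0 ^ (k + 2)) =ᶠ[nhds s] fun s => s ^ (k + 2) := by
      filter_upwards [eventually_gt_nhds h] with t ht
      simp [max_eq_left ht.le]
    have := (hasDerivAt_pow (k + 2) s).congr_of_eventuallyEq h1
    simpa [max_eq_left h.le] using this

lemma contDiff_posPart_sq : ContDiff ℝ 1 (fun s : ℝ => max s 0 ^ 2) := by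
  rw [contDiff_one_iff_deriv]
  refine ⟨fun s => (hasDerivAt_posPart_pow 0 s).differentiableAt, ?_⟩
  have : deriv (fun s : ℝ => max s 0 ^ 2) = fun s => ((0 : ℕ) + 2 : ℝ) * max s 0 ^ (0 + 1) :=
    funext fun s => (hasDerivAt_posPart_pow 0 s).deriv
  rw [this]
  fun_prop

lemma contDiff_posPart_cube : ContDiff ℝ 2 (fun s : ℝ => max s 0 ^ 3) := by
  rw [show (2 : WithTop ℕ∞) = 1 + 1 by norm_num, contDiff_succ_iff_deriv]
  refine ⟨fun s => (hasDerivAt_posPart_pow 1 s).differentiableAt, by simp, ?_⟩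
  have : deriv (fun s : ℝ => max s 0 ^ 3) = fun s => ((1 : ℕ) + 2 : ℝ) * max s 0 ^ 2 :=
    funext fun s => (hasDerivAt_posPart_pow 1 s).deriv
  rw [this]
  exact contDiff_const.mul contDiff_posPart_sq

/-- The weight `(1 - |x|²)₊²`. -/
def wt {n : ℕ} (x : En n) : ℝ := max (1 - ‖x‖ ^ 2) 0 ^ 2

/-- `(1 - |x|²)₊³`, a radial potential for `wt`. -/
def wtPot {n : ℕ} (x : En n) : ℝ := max (1 - ‖x‖ ^ 2) 0 ^ 3

lemma wt_nonneg {n : ℕ} (x : En n) : 0 ≤ wt x := by unfold wt; positivity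

lemma wtPot_nonneg {n : ℕ} (x : En n) : 0 ≤ wtPot x := by
  unfold wtPot; exact pow_nonneg (le_max_right _ _) _

lemma wt_le_one {n : ℕ} (x : En n) : wt x ≤ 1 := by
  unfold wt
  refine pow_le_one₀ (le_max_right _ _) (max_le ?_ zero_le_one)
  have := sq_nonneg ‖x‖; linarith

lemma wt_eq_zero {n : ℕ} {x : En n} (hx : 1 ≤ ‖x‖) : wt x = 0 := by
  unfold wt
  rw [max_eq_right (by nlinarith)]; simp

lemma wtPot_eq_zero {n : ℕ} {x : En n} (hx : 1 ≤ ‖x‖) : wtPot x = 0 := by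
  unfold wtPot
  rw [max_eq_right (by nlinarith)]; simp

lemma wt_pos {n : ℕ} {x : En n} (hx : ‖x‖ < 1) : 0 < wt x := by
  unfold wt
  have : 0 < 1 - ‖x‖ ^ 2 := by nlinarith [norm_nonneg x]
  rw [max_eq_left this.le]; positivity

lemma wt_lower {n : ℕ} {x : En n} (hx : ‖x‖ ≤ 1 / 2) : 9 / 16 ≤ wt x := by
  unfold wt
  have : 3 / 4 ≤ 1 - ‖x‖ ^ 2 := by nlinarith [norm_nonneg x]
  rw [max_eq_left (by linarith)]; nlinarith

@[fun_prop]
lemma continuous_wt {n : ℕ} : Continuous (wt : En n → ℝ) := by unfold wt; fun_prop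

lemma contDiff_wtPot {n : ℕ} : ContDiff ℝ 2 (wtPot : En n → ℝ) :=
  contDiff_posPart_cube.comp (contDiff_const.sub (contDiff_norm_sq ℝ))

@[fun_prop]
lemma continuous_wtPot {n : ℕ} : Continuous (wtPot : En n → ℝ) := contDiff_wtPot.continuous

lemma hasFDerivAt_wtPot {n : ℕ} (x : En n) :
    HasFDerivAt (wtPot : En n → ℝ) ((-6 * wt x) • innerSL ℝ x) x := by
  have h1 : HasFDerivAt (fun y : En n => 1 - ‖y‖ ^ 2) (-(2 • innerSL ℝ x)) x := by
    simpa using ((hasStrictFDerivAt_norm_sq x).hasFDerivAt).const_sub (1 : ℝ)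
  have h2 := (hasDerivAt_posPart_pow 1 (1 - ‖x‖ ^ 2)).comp_hasFDerivAt x h1
  refine h2.congr_fderiv ?_
  ext e
  simp [wt]
  ring

lemma hasCompactSupport_of_eq_zero {n : ℕ} {f : En n → ℝ} (hf : ∀ x : En n, 1 ≤ ‖x‖ → f x = 0) :
    HasCompactSupport f := by
  refine HasCompactSupport.intro (isCompact_closedBall (0 : En n) 1) fun x hx => hf x ?_
  simp at hx; exact hx.le

lemma laplacianAt_eq_laplacian {n : ℕ} (u : En n → ℝ) (x : En n) :
    laplacianAt u x = Laplacian.laplacian u x := by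
  rw [congrFun (InnerProductSpace.laplacian_eq_iteratedFDeriv_orthonormalBasis u
    (EuclideanSpace.basisFun (Fin n) ℝ)) x]
  simp [laplacianAt]

/-- The Laplacian as a sum of iterated directional derivatives. -/
lemma laplacianAt_eq_sum {n : ℕ} {u : En n → ℝ} (x : En n) :
    laplacianAt u x = ∑ i : Fin n, fderiv ℝ (fderiv ℝ u) x (EuclideanSpace.single i 1)
      (EuclideanSpace.single i 1) := by
  simp [laplacianAt, iteratedFDeriv_two_apply]

lemma laplacianAt_congr {n : ℕ} {u v : En n → ℝ} {x : En n} (h : u =ᶠ[nhds x] v) :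
    laplacianAt u x = laplacianAt v x := by
  rw [laplacianAt_eq_laplacian, laplacianAt_eq_laplacian]
  exact (InnerProductSpace.laplacian_congr_nhds h).self_of_nhds

open MeasureTheory in
lemma integrable_of_eq_zero {n : ℕ} {f : En n → ℝ} (hc : Continuous f)
    (hf : ∀ x : En n, 1 ≤ ‖x‖ → f x = 0) : Integrable f :=
  hc.integrable_of_hasCompactSupport (hasCompactSupport_of_eq_zero hf)

open MeasureTheory in
/-- Differentiation under the integral sign for integrands supported in the unit ball. -/
lemma hasDerivAt_integral_of_eq_zero {n : ℕ} {F F' : ℝ → En n → ℝ} (t₀ : ℝ)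
    (hF : ∀ t, Continuous (F t)) (hF' : Continuous fun p : ℝ × En n => F' p.1 p.2)
    (hd : ∀ t x, HasDerivAt (fun t => F t x) (F' t x) t)
    (h0 : ∀ t x, 1 ≤ ‖x‖ → F t x = 0) (h0' : ∀ t x, 1 ≤ ‖x‖ → F' t x = 0) :
    HasDerivAt (fun t => ∫ x, F t x) (∫ x, F' t₀ x) t₀ := by
  have hK : IsCompact (Icc (t₀ - 1) (t₀ + 1) ×ˢ closedBall (0 : En n) 1) :=
    isCompact_Icc.prod (isCompact_closedBall _ _)
  obtain ⟨C, hC⟩ := hK.exists_bound_of_continuousOn hF'.continuousOn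
  have hF'c : ∀ t, Continuous (F' t) := fun t => hF'.comp (by fun_prop : Continuous fun x => (t, x))
  refine (hasDerivAt_integral_of_dominated_loc_of_deriv_le
    (s := Ioo (t₀ - 1) (t₀ + 1)) (bound := (closedBall (0 : En n) 1).indicator fun _ => C)
    (Ioo_mem_nhds (by linarith) (by linarith))
    (Filter.Eventually.of_forall fun t => (hF t).aestronglyMeasurable)
    (integrable_of_eq_zero (hF t₀) (h0 t₀)) (hF'c t₀).aestronglyMeasurable
    (Filter.Eventually.of_forall fun x t ht => ?_) ?_
    (Filter.Eventually.of_forall fun x t _ => hd t x)).2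
  · by_cases hx : x ∈ closedBall (0 : En n) 1
    · rw [indicator_of_mem hx]
      exact hC (t, x) ⟨⟨ht.1.le, ht.2.le⟩, hx⟩
    · rw [indicator_of_notMem hx, h0' t x (by simp at hx; exact hx.le), norm_zero]
  · rw [integrable_indicator_iff isClosed_closedBall.measurableSet]
    exact integrableOn_const (isCompact_closedBall _ _).measure_lt_top.ne

lemma hasFDerivAt_comp_affine {n : ℕ} {F : Type*} [NormedAddCommGroup F] [NormedSpace ℝ F]
    {U : En n → F} (hU : Differentiable ℝ U) (c : En n) (a : ℝ) (x : En n) :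
    HasFDerivAt (fun x => U (c + a • x)) (a • fderiv ℝ U (c + a • x)) x := by
  have h1 : HasFDerivAt (fun x : En n => c + a • x) (a • ContinuousLinearMap.id ℝ (En n)) x := by
    simpa using ((hasFDerivAt_id x).const_smul a).const_add c
  refine ((hU _).hasFDerivAt.comp x h1).congr_fderiv ?_
  ext e; simp

lemma ContDiff.differentiable_fderiv_two {n : ℕ} {U : En n → ℝ} (hU : ContDiff ℝ 2 U) :
    Differentiable ℝ (fderiv ℝ U) :=
  (hU.fderiv_right (m := 1) (by norm_num)).differentiable (by norm_num)

lemma ContDiff.continuous_fderiv_two {n : ℕ} {U : En n → ℝ} (hU : ContDiff ℝ 2 U) :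
    Continuous (fderiv ℝ U) := hU.continuous_fderiv (by norm_num)

lemma ContDiff.continuous_fderiv_fderiv {n : ℕ} {U : En n → ℝ} (hU : ContDiff ℝ 2 U) :
    Continuous (fderiv ℝ (fderiv ℝ U)) :=
  (hU.fderiv_right (m := 1) (by norm_num)).continuous_fderiv (by norm_num)

open MeasureTheory in
/-- Green's identity on the unit ball, with the radial weight `wt` and its potential. -/
lemma green_identity {n : ℕ} {U V : En n → ℝ} (hU : ContDiff ℝ 2 U) (hV : ContDiff ℝ 2 V)
    (c : En n) (a b : ℝ) :
    6 * ∫ x, wt x * (a * V (c + b • x) * fderiv ℝ U (c + a • x) x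
        - b * U (c + a • x) * fderiv ℝ V (c + b • x) x) =
      ∫ x, wtPot x * (a ^ 2 * V (c + b • x) * laplacianAt U (c + a • x)
        - b ^ 2 * U (c + a • x) * laplacianAt V (c + b • x)) := by
  have hUd : Differentiable ℝ U := hU.differentiable (by norm_num)
  have hVd : Differentiable ℝ V := hV.differentiable (by norm_num)
  have hUc := hU.continuous
  have hVc := hV.continuous
  have hU1 := hU.continuous_fderiv_two
  have hV1 := hV.continuous_fderiv_two
  have hU2 := hU.continuous_fderiv_fderiv
  have hV2 := hV.continuous_fderiv_fderiv
  set e : Fin n → En n := fun i => EuclideanSpace.single i 1 with he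
  set X : Fin n → En n → ℝ := fun i x => a * V (c + b • x) * fderiv ℝ U (c + a • x) (e i)
        - b * U (c + a • x) * fderiv ℝ V (c + b • x) (e i) with hX
  set X' : Fin n → En n → ℝ := fun i x =>
        a ^ 2 * V (c + b • x) * fderiv ℝ (fderiv ℝ U) (c + a • x) (e i) (e i)
        - b ^ 2 * U (c + a • x) * fderiv ℝ (fderiv ℝ V) (c + b • x) (e i) (e i) with hX'
  have hXc : ∀ i, Continuous (X i) := fun i => by simp only [hX]; fun_prop
  have hX'c : ∀ i, Continuous (X' i) := fun i => by simp only [hX']; fun_prop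
  have hXd : ∀ i x, HasLineDerivAt ℝ (X i) (X' i x) x (e i) := by
    intro i x
    have hA := hasFDerivAt_comp_affine hUd c a x
    have hB := hasFDerivAt_comp_affine hVd c b x
    have hA1 := (hasFDerivAt_comp_affine hU.differentiable_fderiv_two c a x).clm_apply
      (hasFDerivAt_const (e i) x)
    have hB1 := (hasFDerivAt_comp_affine hV.differentiable_fderiv_two c b x).clm_apply
      (hasFDerivAt_const (e i) x)
    have := (((hB.const_mul a).mul hA1).sub ((hA.const_mul b).mul hB1)).hasLineDerivAt (e i)
    refine Eq.mp (congrArg (fun r => HasLineDerivAt ℝ (X i) r x (e i)) ?_) this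
    simp [hX']
    ring
  have key : ∀ i, ∫ x, wtPot x * X' i x = ∫ x, 6 * (wt x * (x i * X i x)) := by
    intro i
    have h := integral_bilinear_hasLineDerivAt_right_eq_neg_left_of_integrable
      (μ := (volume : Measure (En n))) (f := wtPot) (f' := fun x => -6 * wt x * x i) (g := X i)
      (g' := X' i) (v := e i) (B := ContinuousLinearMap.mul ℝ ℝ) ?_ ?_ ?_ ?_ (fun x _ => hXd i x)
    · simp only [ContinuousLinearMap.mul_apply'] at h
      rw [h, ← integral_neg]
      congr 1; ext x; ring
    · refine integrable_of_eq_zero ?_ fun x hx => ?_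
      · simp only [ContinuousLinearMap.mul_apply']; have := hXc i; fun_prop
      · simp [wt_eq_zero hx]
    · refine integrable_of_eq_zero ?_ fun x hx => ?_
      · simp only [ContinuousLinearMap.mul_apply']; have := hX'c i; fun_prop
      · simp [wtPot_eq_zero hx]
    · refine integrable_of_eq_zero ?_ fun x hx => ?_
      · simp only [ContinuousLinearMap.mul_apply']; have := hXc i; fun_prop
      · simp [wtPot_eq_zero hx]
    · intro x _
      have := (hasFDerivAt_wtPot x).hasLineDerivAt (e i)
      convert this using 1
      simp [he, EuclideanSpace.inner_single_right]
  have hR : ∀ x, wtPot x * (a ^ 2 * V (c + b • x) * laplacianAt U (c + a • x)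
        - b ^ 2 * U (c + a • x) * laplacianAt V (c + b • x)) = ∑ i, wtPot x * X' i x := by
    intro x
    rw [laplacianAt_eq_sum, laplacianAt_eq_sum, Finset.mul_sum, Finset.mul_sum,
      ← Finset.sum_sub_distrib, Finset.mul_sum]
  have hL : ∀ x, 6 * (wt x * (a * V (c + b • x) * fderiv ℝ U (c + a • x) x
        - b * U (c + a • x) * fderiv ℝ V (c + b • x) x)) = ∑ i, 6 * (wt x * (x i * X i x)) := by
    intro x
    have hx : x = ∑ i, x i • e i := by
      have := ((EuclideanSpace.basisFun (Fin n) ℝ).sum_repr x).symm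
      simpa [he] using this
    have h1 : ∀ L : En n →L[ℝ] ℝ, L x = ∑ i, x i * L (e i) := by
      intro L
      conv_lhs => rw [hx]
      simp
    rw [h1, h1, Finset.mul_sum, Finset.mul_sum, ← Finset.sum_sub_distrib, Finset.mul_sum,
      Finset.mul_sum]
    refine Finset.sum_congr rfl fun i _ => ?_
    simp only [hX]; ring
  rw [← integral_const_mul]
  simp_rw [hR, hL]
  rw [integral_finsetSum, integral_finsetSum]
  · exact (Finset.sum_congr rfl fun i _ => key i).symm
  · intro i _
    refine integrable_of_eq_zero ?_ fun x hx => by simp [wtPot_eq_zero hx]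
    have := hX'c i; fun_prop
  · intro i _
    refine integrable_of_eq_zero ?_ fun x hx => by simp [wt_eq_zero hx]
    have := hXc i; fun_prop

/-- The weighted integral of `f` over the ball of center `c` and radius `r`, in rescaled
coordinates. -/
def wtInt {n : ℕ} (f : En n → ℝ) (c : En n) (r : ℝ) : ℝ := ∫ x : En n, wt x * f (c + r • x)

/-- The total mass of `wt`. -/
def wtMass (n : ℕ) : ℝ := ∫ x : En n, wt x

lemma wtMass_pos (n : ℕ) : 0 < wtMass n := by
  refine Continuous.integral_pos_of_hasCompactSupport_nonneg_nonzero continuous_wt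
    (hasCompactSupport_of_eq_zero fun x hx => wt_eq_zero hx) (fun x => wt_nonneg x) (x := 0) ?_
  exact (wt_pos (by simp)).ne'

open MeasureTheory in
lemma integrable_wt_mul {n : ℕ} {f : En n → ℝ} (hf : Continuous f) (c : En n) (r : ℝ) :
    Integrable fun x => wt x * f (c + r • x) :=
  integrable_of_eq_zero (by fun_prop) fun x hx => by simp [wt_eq_zero hx]

lemma add_smul_mem_ball {n : ℕ} {c x : En n} {r : ℝ} (hr : 0 < r) (hx : ‖x‖ < 1) :
    c + r • x ∈ ball c r := by
  rw [mem_ball, dist_self_add_left, norm_smul, Real.norm_of_nonneg hr.le]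
  nlinarith

lemma wtInt_mono {n : ℕ} {f g : En n → ℝ} (hf : Continuous f) (hg : Continuous g) {c : En n}
    {r : ℝ} (hr : 0 < r) (h : ∀ x ∈ ball c r, f x ≤ g x) : wtInt f c r ≤ wtInt g c r := by
  refine MeasureTheory.integral_mono (integrable_wt_mul hf c r) (integrable_wt_mul hg c r)
    fun x => ?_
  rcases lt_or_ge ‖x‖ 1 with hx | hx
  · exact mul_le_mul_of_nonneg_left (h _ (add_smul_mem_ball hr hx)) (wt_nonneg x)
  · simp [wt_eq_zero hx]

lemma wtInt_const {n : ℕ} (a : ℝ) (c : En n) (r : ℝ) : wtInt (fun _ => a) c r = wtMass n * a := by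
  simp [wtInt, wtMass, MeasureTheory.integral_mul_const]

lemma exists_contDiff_extension {n : ℕ} {f : En n → ℝ} {c : En n} {r R : ℝ} (hr : 0 < r)
    (hrR : r < R) (hf : ContDiffOn ℝ 2 f (ball c R)) :
    ∃ g : En n → ℝ, ContDiff ℝ 2 g ∧ ∀ x ∈ closedBall c r, g x = f x := by
  let b : ContDiffBump c := ⟨r, (r + R) / 2, hr, by linarith⟩
  refine ⟨fun x => b x * f x, ?_, fun x hx => by simp [b.one_of_mem_closedBall hx]⟩
  rw [contDiff_iff_contDiffAt]
  intro x
  by_cases hx : x ∈ ball c R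
  · exact b.contDiff.contDiffAt.mul (hf.contDiffAt (isOpen_ball.mem_nhds hx))
  · have : (fun x => b x * f x) =ᶠ[nhds x] fun _ => 0 := by
      have hx' : x ∈ (closedBall c ((r + R) / 2))ᶜ := by
        simp only [mem_ball, not_lt, mem_compl_iff, mem_closedBall, not_le] at hx ⊢
        linarith
      filter_upwards [isClosed_closedBall.isOpen_compl.mem_nhds hx'] with y hy
      have : b y = 0 := b.zero_of_le_dist (by
        rw [mem_compl_iff, mem_closedBall, not_le] at hy
        exact hy.le)
      simp [this]
    exact contDiffAt_const.congr_of_eventuallyEq this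

lemma laplacianAt_congr_ball {n : ℕ} {f g : En n → ℝ} {c : En n} {r : ℝ}
    (h : ∀ x ∈ closedBall c r, g x = f x) {x : En n} (hx : x ∈ ball c r) :
    laplacianAt g x = laplacianAt f x :=
  laplacianAt_congr (by
    filter_upwards [isOpen_ball.mem_nhds hx] with y hy using h y (ball_subset_closedBall hy))

lemma hasDerivAt_comp_curve {n : ℕ} {U : En n → ℝ} (hU : Differentiable ℝ U) (c : En n) {a : ℝ → ℝ}
    {a' t : ℝ} (ha : HasDerivAt a a' t) (x : En n) :
    HasDerivAt (fun t => U (c + a t • x)) (a' * fderiv ℝ U (c + a t • x) x) t := by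
  have h1 : HasDerivAt (fun t => c + a t • x) (a' • x) t := (ha.smul_const x).const_add c
  have := (hU _).hasFDerivAt.comp_hasDerivAt t h1
  exact this.congr_deriv (by simp)

/-- Sub-mean value property of `C²` functions with nonnegative Laplacian. -/
lemma mass_mul_le_wtInt {n : ℕ} {U : En n → ℝ} (hU : ContDiff ℝ 2 U) {c : En n} {r : ℝ}
    (hr : 0 < r) (hΔ : ∀ x ∈ ball c r, 0 ≤ laplacianAt U x) : wtMass n * U c ≤ wtInt U c r := by
  have hUd : Differentiable ℝ U := hU.differentiable (by norm_num)
  have hUc := hU.continuous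
  have hU1 := hU.continuous_fderiv_two
  have hder : ∀ t, HasDerivAt (fun t => wtInt U c t)
      (∫ x, wt x * fderiv ℝ U (c + t • x) x) t := by
    intro t
    refine hasDerivAt_integral_of_eq_zero (F := fun t x => wt x * U (c + t • x))
      (F' := fun t x => wt x * fderiv ℝ U (c + t • x) x) t ?_ ?_ ?_ ?_ ?_
    · intro t; fun_prop
    · fun_prop
    · intro t x
      have := (hasDerivAt_comp_curve hUd c (hasDerivAt_id t) x).const_mul (wt x)
      simpa using this
    · intro t x hx; simp [wt_eq_zero hx]
    · intro t x hx; simp [wt_eq_zero hx]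
  have hmono : MonotoneOn (fun t => wtInt U c t) (Icc 0 r) := by
    refine monotoneOn_of_deriv_nonneg (convex_Icc 0 r)
      (fun t _ => (hder t).continuousAt.continuousWithinAt)
      (fun t _ => (hder t).differentiableAt.differentiableWithinAt) fun t ht => ?_
    rw [interior_Icc] at ht
    rw [(hder t).deriv]
    have hg := green_identity hU (contDiff_const (c := (1 : ℝ))) c t 0
    simp only [mul_one, zero_mul, sub_zero, ne_eq, OfNat.ofNat_ne_zero, not_false_eq_true,
      zero_pow] at hg
    have h1 : ∀ x : En n, wt x * (t * fderiv ℝ U (c + t • x) x)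
        = t * (wt x * fderiv ℝ U (c + t • x) x) := fun x => by ring
    simp_rw [h1] at hg
    rw [MeasureTheory.integral_const_mul] at hg
    have h2 : 0 ≤ ∫ x, wtPot x * (t ^ 2 * laplacianAt U (c + t • x)) := by
      refine MeasureTheory.integral_nonneg fun x => ?_
      rcases lt_or_ge ‖x‖ 1 with hx | hx
      · exact mul_nonneg (wtPot_nonneg x) (mul_nonneg (sq_nonneg _)
          (hΔ _ (ball_subset_ball ht.2.le (add_smul_mem_ball ht.1 hx))))
      · simp [wtPot_eq_zero hx]
    have h3 : 0 ≤ t * ∫ x, wt x * fderiv ℝ U (c + t • x) x := by linarith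
    exact nonneg_of_mul_nonneg_right h3 ht.1
  have := hmono (left_mem_Icc.2 hr.le) (right_mem_Icc.2 hr.le) hr.le
  simpa [wtInt, MeasureTheory.integral_mul_const, wtMass] using this

/-- For harmonic functions, spherical pairings at radii `r` and `s` depend only on `r * s`. -/
lemma integral_mul_eq_of_harmonic {n : ℕ} {U : En n → ℝ} (hU : ContDiff ℝ 2 U) {c : En n} {r : ℝ}
    (hr : 0 < r) (hΔ : ∀ x ∈ ball c (4 * r), laplacianAt U x = 0) :
    ∫ x, wt x * (U (c + (4 * r) • x) * U (c + r • x)) = wtInt (fun y => U y ^ 2) c (2 * r) := by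
  have hUd : Differentiable ℝ U := hU.differentiable (by norm_num)
  have hUc := hU.continuous
  have hU1 := hU.continuous_fderiv_two
  set a : ℝ → ℝ := fun t => 2 * r * Real.exp t with ha
  set b : ℝ → ℝ := fun t => 2 * r * Real.exp (-t) with hb
  have ha' : ∀ t, HasDerivAt a (a t) t := fun t => (Real.hasDerivAt_exp t).const_mul _
  have hb' : ∀ t, HasDerivAt b (-b t) t := fun t => by
    have := ((Real.hasDerivAt_exp (-t)).comp t (hasDerivAt_neg t)).const_mul (2 * r)
    exact this.congr_deriv (by simp only [hb]; ring)
  have hac : Continuous a := by simp only [ha]; fun_prop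
  have hbc : Continuous b := by simp only [hb]; fun_prop
  set I : ℝ → ℝ := fun t => ∫ x, wt x * (U (c + a t • x) * U (c + b t • x)) with hI
  have hder : ∀ t, HasDerivAt I (∫ x, wt x * (a t * U (c + b t • x) * fderiv ℝ U (c + a t • x) x
        - b t * U (c + a t • x) * fderiv ℝ U (c + b t • x) x)) t := by
    intro t
    refine hasDerivAt_integral_of_eq_zero
      (F := fun t x => wt x * (U (c + a t • x) * U (c + b t • x)))
      (F' := fun t x => wt x * (a t * U (c + b t • x) * fderiv ℝ U (c + a t • x) x
        - b t * U (c + a t • x) * fderiv ℝ U (c + b t • x) x)) t ?_ ?_ ?_ ?_ ?_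
    · intro t; fun_prop
    · fun_prop
    · intro t x
      have := ((hasDerivAt_comp_curve hUd c (ha' t) x).mul
        (hasDerivAt_comp_curve hUd c (hb' t) x)).const_mul (wt x)
      exact this.congr_deriv (by ring)
    · intro t x hx; simp [wt_eq_zero hx]
    · intro t x hx; simp [wt_eq_zero hx]
  have hzero : ∀ t ∈ Ico 0 (Real.log 2), HasDerivWithinAt I 0 (Ici t) t := by
    intro t ht
    have hg := green_identity hU hU c (a t) (b t)
    have hapos : 0 < a t := by simp only [ha]; positivity
    have hbpos : 0 < b t := by simp only [hb]; positivity
    have hat : a t ≤ 4 * r := by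
      have : Real.exp t ≤ 2 := by
        rw [← Real.exp_log (show (0 : ℝ) < 2 by norm_num)]; exact Real.exp_le_exp.2 ht.2.le
      simp only [ha]; nlinarith
    have hbt : b t ≤ 4 * r := by
      have : Real.exp (-t) ≤ 1 := Real.exp_le_one_iff.2 (by linarith [ht.1])
      simp only [hb]; nlinarith
    have h2 : ∫ x, wtPot x * (a t ^ 2 * U (c + b t • x) * laplacianAt U (c + a t • x)
        - b t ^ 2 * U (c + a t • x) * laplacianAt U (c + b t • x)) = 0 := by
      rw [← MeasureTheory.integral_zero (En n) ℝ]
      congr 1; ext x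
      rcases lt_or_ge ‖x‖ 1 with hx | hx
      · rw [hΔ _ (ball_subset_ball hat (add_smul_mem_ball hapos hx)),
          hΔ _ (ball_subset_ball hbt (add_smul_mem_ball hbpos hx))]
        ring
      · simp [wtPot_eq_zero hx]
    rw [h2] at hg
    have h3 := hder t
    rw [show (∫ x, wt x * (a t * U (c + b t • x) * fderiv ℝ U (c + a t • x) x
        - b t * U (c + a t • x) * fderiv ℝ U (c + b t • x) x)) = 0 by linarith] at h3
    exact h3.hasDerivWithinAt
  have h := constant_of_has_deriv_right_zero
    (fun t _ => (hder t).continuousAt.continuousWithinAt) hzero (Real.log 2)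
    (right_mem_Icc.2 (Real.log_nonneg (by norm_num)))
  simp only [hI, ha, hb, Real.exp_neg, Real.exp_log (show (0 : ℝ) < 2 by norm_num), Real.exp_zero,
    inv_one, mul_one] at h
  rw [show 2 * r * 2 = 4 * r by ring, show 2 * r * 2⁻¹ = r by ring] at h
  rw [h]
  simp [wtInt, sq]

/-- Comparison of weighted integrals over nested balls. -/
lemma wtInt_le_wtInt {n : ℕ} {f : En n → ℝ} (hf : Continuous f) {p y : En n} {r s : ℝ}
    (hr : 0 < r) (hs : 0 < s) (hps : dist p y + r ≤ s / 2) (h0 : ∀ x ∈ ball y s, 0 ≤ f x) :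
    wtInt f p r ≤ 2 * (s / r) ^ n * wtInt f y s := by
  have h1 : wtInt f p r = (s / r) ^ n *
      ∫ z : En n, wt (r⁻¹ • (y - p) + (s / r) • z) * f (y + s • z) := by
    have e1 : wtInt f p r = ∫ x : En n, wt (r⁻¹ • (y - p) + x) * f (y + r • x) := by
      rw [wtInt, ← MeasureTheory.integral_add_left_eq_self _ (r⁻¹ • (y - p))]
      congr 1; ext x
      congr 2
      rw [smul_add, smul_smul, mul_inv_cancel₀ hr.ne', one_smul]; abel
    have e2 := MeasureTheory.Measure.integral_comp_smul (MeasureTheory.volume)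
      (fun x : En n => wt (r⁻¹ • (y - p) + x) * f (y + r • x)) (s / r)
    have hsr : 0 < s / r := by positivity
    rw [e1]
    simp only [finrank_euclideanSpace, Fintype.card_fin, smul_eq_mul] at e2
    rw [abs_of_pos (inv_pos.2 (pow_pos hsr n))] at e2
    have e3 : ∀ z : En n, r • (s / r) • z = s • z := fun z => by
      rw [smul_smul, mul_div_cancel₀ _ hr.ne']
    simp_rw [e3] at e2
    have e4 : (s / r) ^ n ≠ 0 := by positivity
    rw [e2, ← mul_assoc, mul_inv_cancel₀ e4, one_mul]
  rw [h1, mul_comm (2 : ℝ), mul_assoc, wtInt]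
  refine mul_le_mul_of_nonneg_left ?_ (pow_nonneg (div_pos hs hr).le n)
  rw [← MeasureTheory.integral_const_mul]
  have hfar : ∀ z : En n, 1 / 2 ≤ ‖z‖ → 1 ≤ ‖r⁻¹ • (y - p) + (s / r) • z‖ := by
    intro z hz
    have e4 : r⁻¹ • (y - p) + (s / r) • z = r⁻¹ • (s • z - (p - y)) := by
      rw [smul_sub r⁻¹ (s • z), smul_smul, ← neg_sub p y, smul_neg, div_eq_inv_mul]; abel
    rw [e4, norm_smul, norm_inv, Real.norm_of_nonneg hr.le, ← div_eq_inv_mul, le_div_iff₀ hr]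
    have e5 := norm_sub_norm_le (s • z) (p - y)
    rw [norm_smul, Real.norm_of_nonneg hs.le, ← dist_eq_norm p y] at e5
    nlinarith
  refine MeasureTheory.integral_mono (integrable_of_eq_zero (by fun_prop) fun z hz => ?_)
    ((integrable_wt_mul hf y s).const_mul 2) fun z => ?_
  · rw [wt_eq_zero (hfar z (by linarith)), zero_mul]
  · show wt _ * _ ≤ 2 * (wt z * _)
    rcases lt_or_ge ‖z‖ (1 / 2) with hz | hz
    · have hfz := h0 _ (add_smul_mem_ball (c := y) hs (show ‖z‖ < 1 by linarith))
      have := wt_lower hz.le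
      have := wt_le_one (r⁻¹ • (y - p) + (s / r) • z)
      nlinarith
    · rw [wt_eq_zero (hfar z hz), zero_mul]
      rcases lt_or_ge ‖z‖ 1 with hz1 | hz1
      · have hfz := h0 _ (add_smul_mem_ball (c := y) hs hz1)
        have := wt_nonneg z
        positivity
      · simp [wt_eq_zero hz1]

/-- Laplacian of a composition with a scalar function. -/
lemma laplacianAt_comp {n : ℕ} {U : En n → ℝ} (hU : ContDiff ℝ 2 U) {ψ ψ' ψ'' : ℝ → ℝ}
    (h1 : ∀ s, HasDerivAt ψ (ψ' s) s) (h2 : ∀ s, HasDerivAt ψ' (ψ'' s) s) (x : En n) :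
    laplacianAt (fun y => ψ (U y)) x =
      ψ'' (U x) * ∑ i : Fin n, (fderiv ℝ U x (EuclideanSpace.single i 1)) ^ 2
        + ψ' (U x) * laplacianAt U x := by
  have hUd : Differentiable ℝ U := hU.differentiable (by norm_num)
  have e1 : fderiv ℝ (fun y => ψ (U y)) = fun y => ψ' (U y) • fderiv ℝ U y := by
    ext1 y
    exact ((h1 (U y)).comp_hasFDerivAt y (hUd y).hasFDerivAt).fderiv
  have e2 : HasFDerivAt (fun y => ψ' (U y) • fderiv ℝ U y)
      (ψ' (U x) • fderiv ℝ (fderiv ℝ U) x + (ψ'' (U x) • fderiv ℝ U x).smulRight (fderiv ℝ U x))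
      x :=
    HasFDerivAt.fun_smul ((h2 (U x)).comp_hasFDerivAt x (hUd x).hasFDerivAt)
      (hU.differentiable_fderiv_two x).hasFDerivAt
  rw [laplacianAt_eq_sum, laplacianAt_eq_sum, e1, e2.fderiv, Finset.mul_sum, Finset.mul_sum,
    ← Finset.sum_add_distrib]
  refine Finset.sum_congr rfl fun i _ => ?_
  simp
  ring

lemma HarmonicOnSet.mono {n : ℕ} {u : En n → ℝ} {s t : Set (En n)} (h : HarmonicOnSet u t)
    (hst : s ⊆ t) : HarmonicOnSet u s := ⟨h.1.mono hst, fun x hx => h.2 x (hst hx)⟩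

lemma HarmonicOnSet.exists_extension {n : ℕ} {u : En n → ℝ} {c : En n} {r R : ℝ}
    (h : HarmonicOnSet u (ball c R)) (hr : 0 < r) (hrR : r < R) :
    ∃ U : En n → ℝ, ContDiff ℝ 2 U ∧ (∀ x ∈ closedBall c r, U x = u x) ∧
      ∀ x ∈ ball c r, laplacianAt U x = 0 := by
  obtain ⟨U, hU, hUu⟩ := exists_contDiff_extension hr hrR h.1
  refine ⟨U, hU, hUu, fun x hx => ?_⟩
  rw [laplacianAt_congr_ball hUu hx]
  exact h.2 x (ball_subset_ball hrR.le hx)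

lemma HarmonicOnSet.affine {n : ℕ} {u : En n → ℝ} {c : En n} {R : ℝ}
    (h : HarmonicOnSet u (ball c R)) (a b : ℝ) :
    HarmonicOnSet (fun x => a + b * u x) (ball c R) := by
  refine ⟨contDiffOn_const.add (contDiffOn_const.mul h.1), fun x hx => ?_⟩
  have hx' : dist x c < R := hx
  obtain ⟨r, hr1, hr2⟩ := exists_between hx'
  obtain ⟨U, hU, hUu, hΔ⟩ := h.exists_extension (dist_nonneg.trans_lt hr1) hr2
  rw [← laplacianAt_congr_ball (f := fun x => a + b * u x) (g := fun x => a + b * U x)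
    (c := c) (r := r) (fun y hy => by simp only [hUu y hy]) hr1]
  rw [laplacianAt_comp hU (ψ := fun s => a + b * s) (ψ' := fun _ => b) (ψ'' := fun _ => 0)
    (fun s => by simpa using ((hasDerivAt_id s).const_mul b).const_add a)
    (fun s => hasDerivAt_const s b), hΔ x hr1]
  simp

/-- The constant in Harnack's inequality. -/
def harnackC (n : ℕ) : ℝ := 2 * 4 ^ n

lemma two_le_harnackC (n : ℕ) : 2 ≤ harnackC n := by
  have : (1 : ℝ) ≤ 4 ^ n := one_le_pow₀ (by norm_num)
  unfold harnackC; linarith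

lemma harnack {n : ℕ} {u : En n → ℝ} {q p : En n} {R : ℝ} (hR : 0 < R)
    (hu : HarmonicOnSet u (ball q R)) (h0 : ∀ x ∈ ball q R, 0 ≤ u x) (hp : dist p q ≤ R / 8) :
    u p ≤ harnackC n * u q := by
  obtain ⟨U, hU, hUu, hΔ⟩ := hu.exists_extension (r := 3 / 4 * R) (by linarith) (by linarith)
  have hUp : U p = u p := hUu p (by rw [mem_closedBall]; linarith)
  have hUq : U q = u q := hUu q (by rw [mem_closedBall, dist_self]; linarith)
  have h1 : wtMass n * U p ≤ wtInt U p (R / 8) :=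
    mass_mul_le_wtInt hU (by linarith) fun x hx => (hΔ x (by
      rw [mem_ball] at hx ⊢; linarith [dist_triangle x p q])).ge
  have h2 : wtInt U p (R / 8) ≤ 2 * ((R / 2) / (R / 8)) ^ n * wtInt U q (R / 2) :=
    wtInt_le_wtInt hU.continuous (by linarith) (by linarith) (by linarith) fun x hx => by
      rw [mem_ball] at hx
      rw [hUu x (by rw [mem_closedBall]; linarith)]
      exact h0 x (by rw [mem_ball]; linarith)
  have h3 : wtMass n * (-U q) ≤ wtInt (fun x => - U x) q (R / 2) := by
    refine mass_mul_le_wtInt (U := fun x => - U x) hU.neg (by linarith) fun x hx => ?_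
    rw [laplacianAt_comp hU (ψ := fun s => - s) (ψ' := fun _ => -1) (ψ'' := fun _ => 0)
      (fun s => hasDerivAt_neg s) (fun s => hasDerivAt_const s (-1)),
      hΔ x (ball_subset_ball (by linarith) hx)]
    simp
  have h4 : wtInt (fun x => - U x) q (R / 2) = - wtInt U q (R / 2) := by
    simp [wtInt, MeasureTheory.integral_neg]
  rw [show (R / 2) / (R / 8) = 4 by field_simp; norm_num] at h2
  rw [h4] at h3
  have h5 : 0 < (4 : ℝ) ^ n := by positivity
  have h6 := wtMass_pos n
  rw [hUp] at h1
  rw [hUq] at h3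
  have h7 : wtMass n * u p ≤ wtMass n * (harnackC n * u q) := by
    unfold harnackC
    nlinarith
  exact le_of_mul_le_mul_left h7 h6

lemma harnack_symm {n : ℕ} {u : En n → ℝ} {q p : En n} {R : ℝ} (hR : 0 < R)
    (hu : HarmonicOnSet u (ball q R)) (h0 : ∀ x ∈ ball q R, 0 ≤ u x) (hp : dist p q ≤ R / 16) :
    u q ≤ harnackC n * u p := by
  have hsub : ball p (R / 2) ⊆ ball q R := ball_subset_ball' (by linarith)
  exact harnack (half_pos hR) (hu.mono hsub) (fun x hx => h0 x (hsub hx))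
    (by rw [dist_comm]; linarith)

/-- Oscillation decay at a zero, one step. -/
lemma abs_le_of_zero {n : ℕ} {v : En n → ℝ} {z p : En n} {R S : ℝ} (hR : 0 < R)
    (hv : HarmonicOnSet v (ball z R)) (hS : ∀ x ∈ ball z R, |v x| ≤ S) (hz : v z = 0)
    (hp : dist p z ≤ R / 16) : |v p| ≤ (1 - 1 / harnackC n) * S := by
  have hC := two_le_harnackC n
  have h1 := harnack_symm hR (hv.affine S (-1))
    (fun x hx => by linarith [(abs_le.1 (hS x hx)).2]) hp
  have h2 := harnack_symm hR (hv.affine S 1)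
    (fun x hx => by linarith [(abs_le.1 (hS x hx)).1]) hp
  simp only [hz, mul_zero, add_zero] at h1 h2
  have h3 : S / harnackC n ≤ S + -1 * v p := by rw [div_le_iff₀ (by linarith)]; linarith
  have h4 : S / harnackC n ≤ S + 1 * v p := by rw [div_le_iff₀ (by linarith)]; linarith
  rw [sub_mul, one_mul, one_div_mul_eq_div, abs_le]
  constructor <;> linarith

/-- Oscillation decay at a zero. -/
lemma abs_le_pow_of_zero {n : ℕ} {v : En n → ℝ} {z : En n} {R S : ℝ} (hR : 0 < R)
    (hv : HarmonicOnSet v (ball z R)) (hS : ∀ x ∈ ball z R, |v x| ≤ S) (hz : v z = 0) (k : ℕ) :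
    ∀ p ∈ ball z (R / 16 ^ k), |v p| ≤ (1 - 1 / harnackC n) ^ k * S := by
  induction k with
  | zero => simpa using hS
  | succ k ih =>
    intro p hp
    rw [pow_succ' (1 - 1 / harnackC n), mul_assoc]
    have h1 : R / 16 ^ k ≤ R := div_le_self hR.le (one_le_pow₀ (by norm_num))
    refine abs_le_of_zero (R := R / 16 ^ k) (by positivity) (hv.mono (ball_subset_ball h1)) ih hz ?_
    rw [mem_ball, pow_succ, ← div_div] at hp
    exact hp.le

/-- For every `ε > 0`, a harmonic function bounded by `S` on a ball of radius `R` about a zero is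
bounded by `ε * S` on a ball whose radius is a fixed fraction of `R`. -/
lemma exists_abs_le_of_zero (n : ℕ) {ε : ℝ} (hε : 0 < ε) : ∃ κ > 0, κ ≤ 1 ∧
    ∀ (v : En n → ℝ) (z : En n) (R S : ℝ), 0 < R → HarmonicOnSet v (ball z R) →
      (∀ x ∈ ball z R, |v x| ≤ S) → v z = 0 → ∀ p ∈ ball z (κ * R), |v p| ≤ ε * S := by
  have hC := two_le_harnackC n
  have h1 : 1 / harnackC n ≤ 1 := by rw [div_le_one] <;> linarith
  have h2 : 0 < 1 / harnackC n := by positivity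
  obtain ⟨k, hk⟩ := exists_pow_lt_of_lt_one hε (show 1 - 1 / harnackC n < 1 by linarith)
  refine ⟨1 / 16 ^ k, by positivity,
    by rw [div_le_one (by positivity)]; exact one_le_pow₀ (by norm_num), ?_⟩
  intro v z R S hR hv hS hz p hp
  rw [one_div_mul_eq_div] at hp
  have hS0 : 0 ≤ S := (abs_nonneg _).trans (hS z (mem_ball_self hR))
  exact (abs_le_pow_of_zero hR hv hS hz k p hp).trans (mul_le_mul_of_nonneg_right hk.le hS0)

lemma wtInt_sq_nonneg {n : ℕ} (V : En n → ℝ) (c : En n) (r : ℝ) :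
    0 ≤ wtInt (fun y => V y ^ 2) c r :=
  MeasureTheory.integral_nonneg fun x => mul_nonneg (wt_nonneg x) (sq_nonneg _)

lemma mass_mul_sq_le {n : ℕ} {V : En n → ℝ} (hV : ContDiff ℝ 2 V) {x p : En n} {r s : ℝ}
    (hr : 0 < r) (hs : 0 < s) (hΔ : ∀ y ∈ ball x s, laplacianAt V y = 0)
    (hp : dist p x + r ≤ s / 2) :
    wtMass n * V p ^ 2 ≤ 2 * (s / r) ^ n * wtInt (fun y => V y ^ 2) x s := by
  refine le_trans (mass_mul_le_wtInt (U := fun y => V y ^ 2) (hV.pow 2) hr fun y hy => ?_)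
    (wtInt_le_wtInt (by have := hV.continuous; fun_prop) hr hs hp fun y _ => sq_nonneg _)
  rw [laplacianAt_comp hV (ψ := fun s => s ^ 2) (ψ' := fun s => 2 * s) (ψ'' := fun _ => 2)
    (fun s => by simpa using hasDerivAt_pow 2 s)
    (fun s => by simpa using (hasDerivAt_id s).const_mul 2), hΔ y, mul_zero, add_zero]
  · positivity
  · rw [mem_ball] at hy ⊢; linarith [dist_triangle y p x, dist_nonneg (x := p) (y := x)]

lemma wtInt_sq_le {n : ℕ} {V : En n → ℝ} (hV : Continuous V) {x : En n} {r S : ℝ} (hr : 0 < r)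
    (hS : ∀ y ∈ ball x r, |V y| ≤ S) : wtInt (fun y => V y ^ 2) x r ≤ wtMass n * S ^ 2 := by
  rw [← wtInt_const (S ^ 2) x r]
  refine wtInt_mono (by fun_prop) continuous_const hr fun y hy => ?_
  rw [← sq_abs]
  exact pow_le_pow_left₀ (abs_nonneg _) (hS y hy) 2

lemma sq_integral_wt_mul_le {n : ℕ} {f g : En n → ℝ} (hf : Continuous f) (hg : Continuous g) :
    (∫ x, wt x * (f x * g x)) ^ 2 ≤ (∫ x, wt x * f x ^ 2) * ∫ x, wt x * g x ^ 2 := by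
  have hi : ∀ {F : En n → ℝ}, Continuous F → MeasureTheory.Integrable fun x => wt x * F x :=
    fun hF => integrable_of_eq_zero (by fun_prop) fun x hx => by simp [wt_eq_zero hx]
  have h : ∀ t : ℝ, 0 ≤ (∫ x, wt x * g x ^ 2) * (t * t) + (2 * ∫ x, wt x * (f x * g x)) * t
      + ∫ x, wt x * f x ^ 2 := by
    intro t
    have h1 : 0 ≤ ∫ x, wt x * (f x + t * g x) ^ 2 :=
      MeasureTheory.integral_nonneg fun x => mul_nonneg (wt_nonneg x) (sq_nonneg _)
    have h2 : ∫ x, wt x * (f x + t * g x) ^ 2 = ∫ x, ((wt x * g x ^ 2) * (t * t)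
        + (wt x * (f x * g x)) * (2 * t) + wt x * f x ^ 2) := by
      congr 1; ext x; ring
    rw [h2, MeasureTheory.integral_add, MeasureTheory.integral_add,
      MeasureTheory.integral_mul_const, MeasureTheory.integral_mul_const] at h1
    · linarith
    · exact (hi (hg.pow 2)).mul_const _
    · exact (hi (hf.mul hg)).mul_const _
    · exact ((hi (hg.pow 2)).mul_const _).add ((hi (hf.mul hg)).mul_const _)
    · exact hi (hf.pow 2)
  have := discrim_le_zero h
  unfold discrim at this
  nlinarith

/-- Logarithmic convexity of the weighted square means of a harmonic function. -/
lemma wtInt_sq_three_balls {n : ℕ} {V : En n → ℝ} (hV : ContDiff ℝ 2 V) {x : En n} {r : ℝ}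
    (hr : 0 < r) (hΔ : ∀ y ∈ ball x (4 * r), laplacianAt V y = 0) :
    wtInt (fun y => V y ^ 2) x (2 * r) ^ 2 ≤
      wtInt (fun y => V y ^ 2) x r * wtInt (fun y => V y ^ 2) x (4 * r) := by
  have hc := hV.continuous
  rw [← integral_mul_eq_of_harmonic hV hr hΔ, mul_comm (wtInt _ _ r)]
  exact sq_integral_wt_mul_le (by fun_prop) (by fun_prop)

/-- A harmonic function vanishing near the center vanishes on a ball of definite size. -/
lemma eq_zero_of_eq_zero_ball {n : ℕ} {V : En n → ℝ} (hV : ContDiff ℝ 2 V) {x : En n} {R : ℝ}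
    (hΔ : ∀ y ∈ ball x R, laplacianAt V y = 0) (k : ℕ) :
    ∀ r > 0, R ≤ 2 ^ k * r → (∀ y ∈ ball x r, V y = 0) → ∀ y ∈ ball x (R / 8), V y = 0 := by
  induction k with
  | zero =>
    intro r hr hRr h y hy
    exact h y (ball_subset_ball (by linarith) hy)
  | succ k ih =>
    intro r hr hRr h
    rcases le_or_gt R (8 * r) with h8 | h8
    · exact fun y hy => h y (ball_subset_ball (by linarith) hy)
    · refine ih (2 * r) (by positivity) (by rw [pow_succ] at hRr; linarith) fun y hy => ?_
      have h0 : wtInt (fun y => V y ^ 2) x r ≤ wtMass n * 0 ^ 2 :=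
        wtInt_sq_le hV.continuous hr fun y hy => by simp [h y hy]
      have h1 : ∀ t, 0 < t → t ≤ 2 * r → wtInt (fun y => V y ^ 2) x t = 0 →
          wtInt (fun y => V y ^ 2) x (2 * t) = 0 := by
        intro t ht htr ht0
        have := wtInt_sq_three_balls hV ht fun y hy => hΔ y (ball_subset_ball (by linarith) hy)
        rw [ht0, zero_mul] at this
        exact pow_eq_zero_iff two_ne_zero |>.1 (le_antisymm this (sq_nonneg _))
      have h2 := h1 r hr (by linarith) (le_antisymm (by simpa using h0) (wtInt_sq_nonneg V x r))
      have h3 := h1 (2 * r) (by linarith) le_rfl h2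
      have h5 : ∀ t, 0 < t → dist y x < 2 * r - t → V y = 0 := by
        intro t ht hyt
        have h6 := mass_mul_sq_le hV ht (show 0 < 2 * (2 * r) by linarith) (p := y)
          (fun y hy => hΔ y (ball_subset_ball (by linarith) hy)) (by linarith)
        rw [h3, mul_zero] at h6
        have h7 := wtMass_pos n
        have h8 : V y ^ 2 ≤ 0 := by
          by_contra hcon
          push Not at hcon
          linarith [mul_pos h7 hcon]
        exact pow_eq_zero_iff two_ne_zero |>.1 (le_antisymm h8 (sq_nonneg _))
      rw [mem_ball] at hy
      exact h5 ((2 * r - dist y x) / 2) (by linarith) (by linarith)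

/-- Unique continuation for harmonic functions on a ball. -/
lemma eq_zero_of_harmonic {n : ℕ} {v : En n → ℝ} {c : En n} {R : ℝ}
    (hv : HarmonicOnSet v (ball c R)) {x : En n} (hx : x ∈ ball c R) {r : ℝ} (hr : 0 < r)
    (h0 : ∀ y ∈ ball x r, v y = 0) : ∀ y ∈ ball c R, v y = 0 := by
  have hloc : ∀ x ∈ ball c R, v =ᶠ[nhds x] 0 → ∀ y ∈ ball x ((R - dist x c) / 16), v y = 0 := by
    intro x hx hx0
    rw [mem_ball] at hx
    obtain ⟨ε, hε, hε0⟩ := Metric.eventually_nhds_iff_ball.1 hx0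
    have hsub : ball x (R - dist x c) ⊆ ball c R := ball_subset_ball' (by linarith)
    obtain ⟨V, hV, hVv, hΔ⟩ := (hv.mono hsub).exists_extension
      (r := (R - dist x c) / 2) (by linarith) (by linarith)
    obtain ⟨k, hk⟩ := pow_unbounded_of_one_lt ((R - dist x c) / 2 / min ε ((R - dist x c) / 2))
      (one_lt_two (α := ℝ))
    have hm : 0 < min ε ((R - dist x c) / 2) := lt_min hε (by linarith)
    have := eq_zero_of_eq_zero_ball hV hΔ k _ hm
      ((div_lt_iff₀ hm).1 hk).le fun y hy => by
        rw [hVv y (ball_subset_closedBall (ball_subset_ball (min_le_right _ _) hy))]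
        exact hε0 y (ball_subset_ball (min_le_left _ _) hy)
    intro y hy
    rw [← hVv y (ball_subset_closedBall (ball_subset_ball (by linarith) hy))]
    exact this y (ball_subset_ball (by linarith) hy)
  set s : Set (En n) := {x | v =ᶠ[nhds x] 0} with hs
  have hso : IsOpen s := isOpen_setOfPred_eventually_nhds
  have hcl : closure s ∩ ball c R ⊆ s := by
    rintro y ⟨hy1, hy2⟩
    have hy2' := hy2
    rw [mem_ball] at hy2
    obtain ⟨z, hz, hyz⟩ := Metric.mem_closure_iff.1 hy1 ((R - dist y c) / 32) (by linarith)
    have hzc : dist z c ≤ dist y c + (R - dist y c) / 32 := by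
      have := dist_triangle z y c
      rw [dist_comm] at hyz
      linarith
    have := hloc z (by rw [mem_ball]; linarith) hz
    show v =ᶠ[nhds y] 0
    filter_upwards [isOpen_ball.mem_nhds (show y ∈ ball z ((R - dist z c) / 16) by
      rw [mem_ball]; linarith)] with w hw using this w hw
  have hpre : IsPreconnected (ball c R) := (convex_ball c R).isPreconnected
  have hsub : ball c R ⊆ s := by
    refine hpre.subset_of_closure_inter_subset hso ⟨x, hx, ?_⟩ hcl
    show v =ᶠ[nhds x] 0
    filter_upwards [isOpen_ball.mem_nhds (mem_ball_self hr)] with w hw using h0 w hw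
  exact fun y hy => (hsub hy : v =ᶠ[nhds y] 0).self_of_nhds

/-- A nonconstant harmonic function is bounded below somewhere in every ball of fixed radius. -/
lemma exists_lower_bound {n : ℕ} {v : En n → ℝ} (hv : HarmonicOnSet v (ball 0 1))
    (hnc : ¬ ∃ c : ℝ, ∀ x ∈ ball (0 : En n) 1, v x = c) {ε : ℝ} (hε : 0 < ε) :
    ∃ m > 0, ∀ x ∈ ball (0 : En n) (1 / 2), ∃ p ∈ ball x ε, m ≤ |v p| := by
  suffices h : ∃ m > 0, ∀ x ∈ closedBall (0 : En n) (1 / 2), ∃ p ∈ ball x ε, m ≤ |v p| by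
    obtain ⟨m, hm, h⟩ := h
    exact ⟨m, hm, fun x hx => h x (ball_subset_closedBall hx)⟩
  refine (isCompact_closedBall (0 : En n) (1 / 2)).induction_on
    (p := fun s => ∃ m > 0, ∀ x ∈ s, ∃ p ∈ ball x ε, m ≤ |v p|) ⟨1, one_pos, by simp⟩ ?_ ?_ ?_
  · rintro s t hst ⟨m, hm, h⟩
    exact ⟨m, hm, fun x hx => h x (hst hx)⟩
  · rintro s t ⟨m, hm, h⟩ ⟨m', hm', h'⟩
    refine ⟨min m m', lt_min hm hm', ?_⟩
    rintro x (hx | hx)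
    · obtain ⟨p, hp, h1⟩ := h x hx
      exact ⟨p, hp, (min_le_left _ _).trans h1⟩
    · obtain ⟨p, hp, h1⟩ := h' x hx
      exact ⟨p, hp, (min_le_right _ _).trans h1⟩
  · intro x hx
    rw [mem_closedBall] at hx
    have : ∃ p ∈ ball x (ε / 2), v p ≠ 0 := by
      by_contra hcon
      push Not at hcon
      exact hnc ⟨0, eq_zero_of_harmonic hv (x := x) (by rw [mem_ball]; linarith) (half_pos hε) hcon⟩
    obtain ⟨p, hp, hvp⟩ := this
    refine ⟨ball x (ε / 2), mem_nhdsWithin_of_mem_nhds (isOpen_ball.mem_nhds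
      (mem_ball_self (half_pos hε))), |v p|, abs_pos.2 hvp, fun y hy => ⟨p, ?_, le_rfl⟩⟩
    rw [mem_ball] at hp hy ⊢
    have := dist_triangle p x y
    rw [dist_comm x y] at this
    linarith

lemma HarmonicOnSet.continuousOn {n : ℕ} {u : En n → ℝ} {s : Set (En n)} (h : HarmonicOnSet u s) :
    ContinuousOn u s := h.1.continuousOn

lemma HarmonicOnSet.exists_bound {n : ℕ} {u : En n → ℝ} {c : En n} {r R : ℝ}
    (h : HarmonicOnSet u (ball c R)) (hr : r < R) : ∃ S > 0, ∀ x ∈ closedBall c r, |u x| ≤ S := by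
  obtain ⟨S, hS⟩ := (isCompact_closedBall c r).exists_bound_of_continuousOn
    (h.continuousOn.mono (closedBall_subset_ball hr))
  exact ⟨max S 1, lt_max_of_lt_right one_pos, fun x hx => (hS x hx).trans (le_max_left _ _)⟩

/-- Doubling inequality for the weighted square means, uniformly in the center. -/
lemma exists_wtInt_sq_doubling {n : ℕ} {v : En n → ℝ} (hv : HarmonicOnSet v (ball 0 1))
    (hnc : ¬ ∃ c : ℝ, ∀ x ∈ ball (0 : En n) 1, v x = c) :
    ∃ V : En n → ℝ, ContDiff ℝ 2 V ∧ (∀ x ∈ closedBall (0 : En n) (7 / 8), V x = v x) ∧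
      (∀ x ∈ ball (0 : En n) (7 / 8), laplacianAt V x = 0) ∧
      ∃ Λ ≥ 1, ∀ x ∈ ball (0 : En n) (1 / 2), ∀ ρ, 0 < ρ → ρ ≤ 1 / 16 →
        wtInt (fun y => V y ^ 2) x (2 * ρ) ≤ Λ * wtInt (fun y => V y ^ 2) x ρ := by
  obtain ⟨V, hV, hVv, hΔ⟩ := hv.exists_extension (r := 7 / 8) (by norm_num) (by norm_num)
  refine ⟨V, hV, hVv, hΔ, ?_⟩
  obtain ⟨m, hm, hlow⟩ := exists_lower_bound hv hnc (show (0 : ℝ) < 1 / 128 by norm_num)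
  obtain ⟨S, hS, hup⟩ := hv.exists_bound (show (7 / 8 : ℝ) < 1 by norm_num)
  set Λ : ℝ := max 1 (S ^ 2 * (2 * 8 ^ n) / m ^ 2) with hΛ
  refine ⟨Λ, le_max_left _ _, fun x hx => ?_⟩
  rw [mem_ball] at hx
  have hsub : ∀ {t : ℝ}, t ≤ 3 / 8 → ball x t ⊆ ball (0 : En n) (7 / 8) := fun ht =>
    ball_subset_ball' (by linarith)
  have key : ∀ k : ℕ, ∀ ρ, 0 < ρ → 1 / 32 ≤ 2 ^ k * ρ → ρ ≤ 1 / 16 →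
      wtInt (fun y => V y ^ 2) x (2 * ρ) ≤ Λ * wtInt (fun y => V y ^ 2) x ρ := by
    intro k
    induction k with
    | zero =>
      intro ρ hρ h1 h2
      rw [pow_zero, one_mul] at h1
      have hupper : wtInt (fun y => V y ^ 2) x (2 * ρ) ≤ wtMass n * S ^ 2 :=
        wtInt_sq_le hV.continuous (by linarith) fun y hy => by
          have := hsub (show 2 * ρ ≤ 3 / 8 by linarith) hy
          rw [hVv y (ball_subset_closedBall this)]
          exact hup y (ball_subset_closedBall this)
      obtain ⟨p, hp, hpm⟩ := hlow x hx
      rw [mem_ball] at hp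
      have hlower := mass_mul_sq_le hV (x := x) (p := p) (show (0 : ℝ) < 1 / 128 by norm_num) hρ
        (fun y hy => hΔ y (hsub (by linarith) hy)) (by linarith)
      have hpv : V p = v p := hVv p (ball_subset_closedBall
        (hsub (show (1 : ℝ) / 128 ≤ 3 / 8 by norm_num) (mem_ball.2 hp)))
      have hm2 : m ^ 2 ≤ V p ^ 2 := by
        rw [hpv, ← sq_abs (v p)]; exact pow_le_pow_left₀ hm.le hpm 2
      have hW := wtInt_sq_nonneg V x ρ
      have hM := wtMass_pos n
      have h8 : (ρ / (1 / 128)) ^ n ≤ 8 ^ n :=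
        pow_le_pow_left₀ (by positivity) (by linarith) n
      have e1 : wtMass n * m ^ 2 ≤ 2 * 8 ^ n * wtInt (fun y => V y ^ 2) x ρ := by
        refine (mul_le_mul_of_nonneg_left hm2 hM.le).trans (hlower.trans ?_)
        gcongr
      calc wtInt (fun y => V y ^ 2) x (2 * ρ) ≤ wtMass n * S ^ 2 := hupper
        _ = S ^ 2 / m ^ 2 * (wtMass n * m ^ 2) := by field_simp
        _ ≤ S ^ 2 / m ^ 2 * (2 * 8 ^ n * wtInt (fun y => V y ^ 2) x ρ) := by gcongr
        _ = S ^ 2 * (2 * 8 ^ n) / m ^ 2 * wtInt (fun y => V y ^ 2) x ρ := by ring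
        _ ≤ Λ * wtInt (fun y => V y ^ 2) x ρ := by gcongr; exact le_max_right _ _
    | succ k ih =>
      intro ρ hρ h1 h2
      rcases le_or_gt (2 * ρ) (1 / 16) with h3 | h3
      · have h4 := ih (2 * ρ) (by linarith) (by rw [pow_succ] at h1; linarith) h3
        have h5 := wtInt_sq_three_balls hV hρ fun y hy => hΔ y (hsub (by linarith) hy)
        rw [show 4 * ρ = 2 * (2 * ρ) by ring] at h5
        have h6 := wtInt_sq_nonneg V x ρ
        have h7 := wtInt_sq_nonneg V x (2 * ρ)
        have hΛ1 : 1 ≤ Λ := le_max_left _ _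
        rcases h7.eq_or_lt with h8 | h8
        · rw [← h8]; positivity
        · refine le_of_mul_le_mul_right ?_ h8
          nlinarith
      · refine ih ρ hρ ?_ h2
        have : (1 : ℝ) ≤ 2 ^ k := one_le_pow₀ (by norm_num)
        nlinarith
  intro ρ hρ hρ2
  obtain ⟨k, hk⟩ := pow_unbounded_of_one_lt (1 / 32 / ρ) (one_lt_two (α := ℝ))
  exact key k ρ hρ ((div_lt_iff₀ hρ).1 hk).le hρ2

/-- Doubling inequality for the supremum, uniformly in the center. -/
lemma exists_doubling {n : ℕ} {v : En n → ℝ} (hv : HarmonicOnSet v (ball 0 1))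
    (hnc : ¬ ∃ c : ℝ, ∀ x ∈ ball (0 : En n) 1, v x = c) :
    ∃ Λ ≥ 1, ∀ x ∈ ball (0 : En n) (1 / 2), ∀ r S, 0 < r → r ≤ 1 / 512 →
      (∀ y ∈ ball x r, |v y| ≤ S) → ∀ y ∈ ball x (16 * r), |v y| ≤ Λ * S := by
  obtain ⟨V, hV, hVv, hΔ, Λ, hΛ, hdb⟩ := exists_wtInt_sq_doubling hv hnc
  have hΛ4 : 1 ≤ 2 * 4 ^ n * Λ ^ 6 := by
    have h1 : (1 : ℝ) ≤ 4 ^ n := one_le_pow₀ (by norm_num)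
    have h2 : 1 ≤ Λ ^ 6 := one_le_pow₀ hΛ
    nlinarith
  refine ⟨2 * 4 ^ n * Λ ^ 6, hΛ4, fun x hx r S hr hr2 hS y hy => ?_⟩
  have hx' := hx
  rw [mem_ball] at hx hy
  have hsub : ∀ {t : ℝ}, t ≤ 3 / 8 → ball x t ⊆ ball (0 : En n) (7 / 8) := fun ht =>
    ball_subset_ball' (by linarith)
  have hS0 : 0 ≤ S := (abs_nonneg _).trans (hS x (mem_ball_self hr))
  have hiter : ∀ k : ℕ, k ≤ 6 → wtInt (fun y => V y ^ 2) x (2 ^ k * r) ≤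
      Λ ^ k * wtInt (fun y => V y ^ 2) x r := by
    intro k
    induction k with
    | zero => simp
    | succ k ih =>
      intro hk
      have h1 : (2 : ℝ) ^ k ≤ 2 ^ 5 := pow_le_pow_right₀ (by norm_num) (by omega)
      have h2 := hdb x hx' (2 ^ k * r) (by positivity) (by nlinarith)
      rw [pow_succ', mul_assoc, pow_succ' Λ, mul_assoc]
      exact h2.trans (mul_le_mul_of_nonneg_left (ih (by omega)) (by linarith))
  have h64 := hiter 6 le_rfl
  have h1 := mass_mul_sq_le hV (x := x) (p := y) (show 0 < 16 * r by linarith)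
    (show 0 < 64 * r by linarith) (fun y hy => hΔ y (hsub (by linarith) hy)) (by linarith)
  rw [show 64 * r / (16 * r) = 4 by field_simp; norm_num] at h1
  have h2 : wtInt (fun y => V y ^ 2) x r ≤ wtMass n * S ^ 2 :=
    wtInt_sq_le hV.continuous hr fun y hy => by
      rw [hVv y (ball_subset_closedBall (hsub (by linarith) hy))]
      exact hS y hy
  have hVy : V y = v y := hVv y (ball_subset_closedBall
    (hsub (show 16 * r ≤ 3 / 8 by linarith) (mem_ball.2 hy)))
  have hM := wtMass_pos n
  have h3 : wtMass n * V y ^ 2 ≤ wtMass n * (2 * 4 ^ n * Λ ^ 6 * S ^ 2) := by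
    calc wtMass n * V y ^ 2 ≤ 2 * 4 ^ n * wtInt (fun y => V y ^ 2) x (64 * r) := h1
      _ ≤ 2 * 4 ^ n * (Λ ^ 6 * (wtMass n * S ^ 2)) := by
        gcongr
        refine le_trans (by norm_num at h64 ⊢; exact h64) (mul_le_mul_of_nonneg_left h2 ?_)
        positivity
      _ = _ := by ring
  have h4 := le_of_mul_le_mul_left h3 hM
  rw [hVy] at h4
  refine abs_le_of_sq_le_sq ?_ (by positivity)
  refine h4.trans ?_
  rw [mul_pow]
  gcongr
  nlinarith

/-- Cutting off a harmonic function outside one component of a superlevel set yields a `C²`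
subharmonic function. -/
lemma contDiffAt_truncation {n : ℕ} {G : En n → ℝ} (hG : ContDiff ℝ 2 G) {x : En n} {R s b : ℝ}
    (hsb : s < b) (hΔ : ∀ y ∈ ball x R, laplacianAt G y = 0) {D : Set (En n)}
    (hD : D = connectedComponentIn {y ∈ ball x R | s < G y} x) {y : En n} (hy : y ∈ ball x R) :
    ContDiffAt ℝ 2 (D.indicator fun y => max (G y - b) 0 ^ 3) y ∧
      0 ≤ laplacianAt (D.indicator fun y => max (G y - b) 0 ^ 3) y := by
  classical
  have hGc := hG.continuous
  have hWo : IsOpen {y ∈ ball x R | s < G y} :=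
    isOpen_ball.inter (isOpen_lt continuous_const hGc)
  have hDo : IsOpen D := hD ▸ hWo.connectedComponentIn
  have hzero : (D.indicator fun y => max (G y - b) 0 ^ 3) =ᶠ[nhds y] (fun _ => (0 : ℝ)) →
      ContDiffAt ℝ 2 (D.indicator fun y => max (G y - b) 0 ^ 3) y ∧
      0 ≤ laplacianAt (D.indicator fun y => max (G y - b) 0 ^ 3) y := by
    intro h
    refine ⟨contDiffAt_const.congr_of_eventuallyEq h, ?_⟩
    rw [laplacianAt_congr h, laplacianAt_eq_laplacian, InnerProductSpace.laplacian_const]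
    rfl
  by_cases hyD : y ∈ D
  · have h : (D.indicator fun y => max (G y - b) 0 ^ 3) =ᶠ[nhds y]
        (fun y => max (G y - b) 0 ^ 3) := by
      filter_upwards [hDo.mem_nhds hyD] with w hw using indicator_of_mem hw _
    refine ⟨((contDiff_posPart_cube.comp (hG.sub contDiff_const)).contDiffAt).congr_of_eventuallyEq
      h, ?_⟩
    rw [laplacianAt_congr h, laplacianAt_comp hG (ψ := fun t => max (t - b) 0 ^ 3)
      (ψ' := fun t => 3 * max (t - b) 0 ^ 2) (ψ'' := fun t => 3 * (2 * max (t - b) 0)), hΔ y hy]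
    · have : 0 ≤ max (G y - b) 0 := le_max_right _ _
      positivity
    · intro t
      have := (hasDerivAt_posPart_pow 1 (t - b)).comp t ((hasDerivAt_id t).sub_const b)
      exact this.congr_deriv (by norm_num)
    · intro t
      have := ((hasDerivAt_posPart_pow 0 (t - b)).comp t
        ((hasDerivAt_id t).sub_const b)).const_mul 3
      exact this.congr_deriv (by norm_num)
  · apply hzero
    rcases lt_or_ge s (G y) with h | h
    · have hyW : y ∈ {y ∈ ball x R | s < G y} := ⟨hy, h⟩
      filter_upwards [hWo.connectedComponentIn.mem_nhds (mem_connectedComponentIn hyW)] with w hw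
      refine indicator_of_notMem (fun hwD => hyD ?_) _
      rw [hD] at hwD ⊢
      rw [connectedComponentIn_eq hwD, ← connectedComponentIn_eq hw]
      exact mem_connectedComponentIn hyW
    · filter_upwards [(isOpen_lt hGc continuous_const).mem_nhds (h.trans_lt hsb)] with w hw
      have hw' : G w < b := hw
      simp [indicator, max_eq_right (sub_nonpos.2 hw'.le)]

/-- A harmonic function with a small ball of low values near `x` must grow by a definite factor
on the component of its superlevel set containing `x`. -/
lemma exists_growth_on_component {n : ℕ} {G : En n → ℝ} (hG : ContDiff ℝ 2 G) {x z : En n}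
    {d τ a δ : ℝ} (hd : 0 < d) (hτ : 0 < τ) (hτd : τ ≤ d)
    (hΔ : ∀ y ∈ ball x (16 * d), laplacianAt G y = 0) (ha : 0 < a) (hGx : G x = a)
    (hzx : dist z x < 2 * d) (hz : ∀ y ∈ ball z τ, G y ≤ a / 2)
    (hδ : 28 * δ * (2 * (8 * d / τ) ^ n) = 1) :
    ∃ y ∈ connectedComponentIn {y ∈ ball x (16 * d) | a / 2 < G y} x, (1 + δ) * a ≤ G y := by
  set D := connectedComponentIn {y ∈ ball x (16 * d) | a / 2 < G y} x with hD
  by_contra hcon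
  push Not at hcon
  have hxD : x ∈ D := mem_connectedComponentIn
    ⟨mem_ball_self (by linarith), by rw [hGx]; linarith⟩
  have hDW : D ⊆ {y ∈ ball x (16 * d) | a / 2 < G y} := connectedComponentIn_subset _ _
  set K : ℝ := 2 * (8 * d / τ) ^ n with hK
  have hK2 : 2 ≤ K := by
    have : (1 : ℝ) ≤ (8 * d / τ) ^ n := one_le_pow₀ (by rw [le_div_iff₀ hτ]; linarith)
    linarith
  have hδ0 : 0 < δ := by
    by_contra h
    push Not at h
    nlinarith
  have hδ1 : 4 * δ ≤ 1 := by nlinarith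
  set f : En n → ℝ := D.indicator fun y => max (G y - 3 / 4 * a) 0 ^ 3 with hf
  have htr : ∀ y ∈ ball x (16 * d), ContDiffAt ℝ 2 f y ∧ 0 ≤ laplacianAt f y := fun y hy =>
    contDiffAt_truncation hG (by linarith) hΔ hD hy
  have hfx : f x = (a / 4) ^ 3 := by
    rw [hf, indicator_of_mem hxD, hGx, max_eq_left (by linarith)]; ring
  set M : ℝ := (a / 4 + δ * a) ^ 3 with hM
  have hM0 : 0 ≤ M := by positivity
  have hfM : ∀ y, f y ≤ M := by
    intro y
    by_cases hy : y ∈ D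
    · rw [hf, indicator_of_mem hy]
      have := hcon y hy
      exact pow_le_pow_left₀ (le_max_right _ _) (max_le (by linarith) (by positivity)) 3
    · rw [hf, indicator_of_notMem hy]; exact hM0
  have hfz : ∀ y ∈ ball z τ, f y = 0 := by
    intro y hy
    refine indicator_of_notMem (fun hyD => ?_) _
    linarith [(hDW hyD).2, hz y hy]
  obtain ⟨F, hF, hFf⟩ := exists_contDiff_extension (c := x) (r := 12 * d) (R := 16 * d) (f := f)
    (by linarith) (by linarith) fun y hy => (htr y hy).1.contDiffWithinAt
  have hFc := hF.continuous
  have h1 : wtMass n * F x ≤ wtInt F x (8 * d) := by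
    refine mass_mul_le_wtInt hF (by linarith) fun y hy => ?_
    rw [laplacianAt_congr_ball hFf (ball_subset_ball (by linarith) hy)]
    exact (htr y (ball_subset_ball (by linarith) hy)).2
  have h2 : wtInt (fun y => M - F y) x (8 * d) = wtMass n * M - wtInt F x (8 * d) := by
    rw [← wtInt_const M x (8 * d), wtInt, wtInt, wtInt, ← MeasureTheory.integral_sub
      (integrable_wt_mul continuous_const x (8 * d)) (integrable_wt_mul hFc x (8 * d))]
    simp only [mul_sub]
  have h3 : wtInt (fun y => M - F y) z τ ≤ K * wtInt (fun y => M - F y) x (8 * d) :=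
    wtInt_le_wtInt (by fun_prop) hτ (by linarith) (by linarith) fun y hy => by
      rw [hFf y (ball_subset_closedBall (ball_subset_ball (by linarith) hy))]
      linarith [hfM y]
  have h4 : wtMass n * M ≤ wtInt (fun y => M - F y) z τ := by
    rw [← wtInt_const M z τ]
    refine wtInt_mono continuous_const (by fun_prop) hτ fun y hy => ?_
    rw [hFf y, hfz y hy, sub_zero]
    rw [mem_ball] at hy
    rw [mem_closedBall]
    linarith [dist_triangle y z x]
  have hFx : F x = (a / 4) ^ 3 := by
    rw [← hfx]; exact hFf x (mem_closedBall_self (by linarith))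
  have hm := wtMass_pos n
  have h5 : wtMass n * M ≤ wtMass n * (K * (M - (a / 4) ^ 3)) := by
    rw [h2] at h3
    rw [hFx] at h1
    nlinarith
  have h6 := le_of_mul_le_mul_left h5 hm
  have h7 : M ≤ (a / 4) ^ 3 * (1 + 28 * δ) := by
    have e : M = (a / 4) ^ 3 * (1 + 4 * δ) ^ 3 := by rw [hM]; ring
    rw [e]
    refine mul_le_mul_of_nonneg_left ?_ (by positivity)
    nlinarith [mul_nonneg hδ0.le (sub_nonneg.2 hδ1), mul_nonneg (mul_nonneg hδ0.le hδ0.le)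
      (sub_nonneg.2 hδ1)]
  have ha3 : 0 < (a / 4) ^ 3 := by positivity
  have h8 : K * (28 * δ) = 1 := by linarith
  have h9 : (a / 4) ^ 3 < M := by
    have e : M = (a / 4) ^ 3 * (1 + 4 * δ) ^ 3 := by rw [hM]; ring
    rw [e]
    have : 1 < (1 + 4 * δ) ^ 3 := one_lt_pow₀ (by linarith) (by norm_num)
    nlinarith
  nlinarith

/-- A function on a connected set whose oscillation is controlled at a small scale has controlled
oscillation. -/
lemma abs_sub_le_of_cover {X ι : Type*} [PseudoMetricSpace X] {D : Set X} (hD : IsPreconnected D)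
    {L : X → ℝ} (hL : ContinuousOn L D) (t : Finset ι) (c : ι → X) {r h : ℝ}
    (hcov : D ⊆ ⋃ i ∈ t, ball (c i) r) (hh : 0 ≤ h)
    (hosc : ∀ p ∈ D, ∀ q ∈ D, dist p q < 2 * r → |L p - L q| ≤ h) {p q : X} (hp : p ∈ D)
    (hq : q ∈ D) : |L p - L q| ≤ t.card * h := by
  have h1 : uIcc (L q) (L p) ⊆ L '' D :=
    (hD.image L hL).ordConnected.uIcc_subset (mem_image_of_mem L hq) (mem_image_of_mem L hp)
  have h2 : L '' D ⊆ ⋃ i ∈ t, L '' (D ∩ ball (c i) r) := by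
    rintro _ ⟨y, hy, rfl⟩
    obtain ⟨i, hi, hyi⟩ := mem_iUnion₂.1 (hcov hy)
    exact mem_iUnion₂.2 ⟨i, hi, mem_image_of_mem L ⟨hy, hyi⟩⟩
  have h3 : MeasureTheory.volume (uIcc (L q) (L p)) ≤ ENNReal.ofReal (t.card * h) := by
    calc MeasureTheory.volume (uIcc (L q) (L p))
        ≤ ∑ i ∈ t, MeasureTheory.volume (L '' (D ∩ ball (c i) r)) :=
          (MeasureTheory.measure_mono (h1.trans h2)).trans
            (MeasureTheory.measure_biUnion_finset_le _ _)
      _ ≤ ∑ _i ∈ t, ENNReal.ofReal h := by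
          refine Finset.sum_le_sum fun i _ => (Real.volume_le_diam _).trans ?_
          refine Metric.ediam_le ?_
          rintro _ ⟨y, ⟨hyD, hy⟩, rfl⟩ _ ⟨w, ⟨hwD, hw⟩, rfl⟩
          rw [edist_dist, Real.dist_eq]
          refine ENNReal.ofReal_le_ofReal (hosc y hyD w hwD ?_)
          rw [mem_ball] at hy hw
          rw [dist_comm] at hw
          linarith [dist_triangle y (c i) w]
      _ = ENNReal.ofReal (t.card * h) := by
          rw [Finset.sum_const, ENNReal.ofReal_mul (by positivity), nsmul_eq_mul,
            ENNReal.ofReal_natCast]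
  rw [Real.volume_interval] at h3
  exact (ENNReal.ofReal_le_ofReal_iff (by positivity)).1 h3

lemma harnack_abs {n : ℕ} {u : En n → ℝ} {q p : En n} {R : ℝ} (hR : 0 < R)
    (hu : HarmonicOnSet u (ball q R)) (h0 : ∀ x ∈ ball q R, u x ≠ 0) (hp : dist p q ≤ R / 16) :
    |u p| ≤ harnackC n * |u q| ∧ |u q| ≤ harnackC n * |u p| := by
  have hpos : ∀ f : En n → ℝ, HarmonicOnSet f (ball q R) → (∀ x ∈ ball q R, 0 ≤ f x) →
      |f p| ≤ harnackC n * |f q| ∧ |f q| ≤ harnackC n * |f p| := by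
    intro f hf hf0
    have hpm : p ∈ ball q R := by rw [mem_ball]; linarith
    rw [abs_of_nonneg (hf0 p hpm), abs_of_nonneg (hf0 q (mem_ball_self hR))]
    exact ⟨harnack hR hf hf0 (by linarith), harnack_symm hR hf hf0 hp⟩
  have hconn : IsPreconnected (ball q R) := (convex_ball q R).isPreconnected
  have hsign : (∀ x ∈ ball q R, 0 ≤ u x) ∨ ∀ x ∈ ball q R, u x ≤ 0 := by
    by_contra hcon
    push Not at hcon
    obtain ⟨⟨x, hx, hx0⟩, y, hy, hy0⟩ := hcon
    obtain ⟨w, hw, hw0⟩ := hconn.intermediate_value hx hy hu.continuousOn ⟨hx0.le, hy0.le⟩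
    exact h0 w hw hw0
  rcases hsign with h | h
  · exact hpos u hu h
  · have := hpos _ (hu.affine 0 (-1)) fun x hx => by linarith [h x hx]
    simpa using this

lemma ne_zero_of_dist_lt_infDist {n : ℕ} {u : En n → ℝ} {x y : En n} (hy : y ∈ ball (0 : En n) 1)
    (h : dist y x < infDist x (zeroSet u (ball 0 1))) : u y ≠ 0 := fun h0 => by
  have := infDist_le_dist_of_mem (x := x) (show y ∈ zeroSet u (ball 0 1) from ⟨hy, h0⟩)
  rw [dist_comm] at this
  linarith

lemma infDist_zeroSet_pos {n : ℕ} {u : En n → ℝ} (hu : HarmonicOnSet u (ball 0 1))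
    (hne : (zeroSet u (ball 0 1)).Nonempty) {x : En n} (hx : x ∈ ball (0 : En n) 1)
    (hux : u x ≠ 0) : 0 < infDist x (zeroSet u (ball 0 1)) := by
  have h1 : ∀ᶠ y in nhds x, u y ≠ 0 :=
    (hu.continuousOn.continuousAt (isOpen_ball.mem_nhds hx)).eventually_ne hux
  obtain ⟨ε, hε, h⟩ := Metric.eventually_nhds_iff_ball.1 h1
  refine hε.trans_le ((le_infDist hne).2 fun z hz => ?_)
  by_contra hcon
  push Not at hcon
  exact h z (by rwa [mem_ball, dist_comm]) hz.2

/-- Growth of a harmonic function near its zero set. -/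
lemma exists_growth {n : ℕ} {u : En n → ℝ} (hu : HarmonicOnSet u (ball 0 1))
    (hne : (zeroSet u (ball 0 1)).Nonempty) {x : En n} (hx : x ∈ ball (0 : En n) (1 / 2))
    (hux : u x ≠ 0) (hd : infDist x (zeroSet u (ball 0 1)) ≤ 1 / 68) :
    ∃ y ∈ ball x (34 * infDist x (zeroSet u (ball 0 1))),
      (1 + 1 / harnackC n) * |u x| ≤ |u y| := by
  have hd0 := infDist_zeroSet_pos hu hne (ball_subset_ball (by norm_num) hx) hux
  set d := infDist x (zeroSet u (ball 0 1)) with hdd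
  obtain ⟨z, hz, hxz⟩ := (infDist_lt_iff hne).1 (show infDist x (zeroSet u (ball 0 1)) < 2 * d by
    linarith)
  by_contra hcon
  push Not at hcon
  rw [mem_ball] at hx
  have hsub : ball z (32 * d) ⊆ ball x (34 * d) :=
    ball_subset_ball' (by rw [dist_comm]; linarith)
  have hsub1 : ball x (34 * d) ⊆ ball 0 1 := ball_subset_ball' (by linarith)
  have hC := two_le_harnackC n
  have ha : 0 < |u x| := abs_pos.2 hux
  obtain ⟨σ, hσ, hσx⟩ : ∃ σ : ℝ, |σ| = 1 ∧ σ * u x = |u x| := by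
    rcases lt_or_gt_of_ne hux with h | h
    · exact ⟨-1, by simp, by rw [abs_of_neg h]; ring⟩
    · exact ⟨1, by simp, by rw [abs_of_pos h]; ring⟩
  have h1 := harnack_symm (p := x) (by linarith)
    ((hu.mono (hsub.trans hsub1)).affine ((1 + 1 / harnackC n) * |u x|) (-σ)) (fun y hy => by
      have h2 := hcon y (hsub hy)
      have h3 : σ * u y ≤ |u y| := by
        calc σ * u y ≤ |σ * u y| := le_abs_self _
          _ = |u y| := by rw [abs_mul, hσ, one_mul]
      linarith) (show dist x z ≤ 32 * d / 16 by linarith)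
  rw [hz.2, neg_mul, neg_mul, hσx, mul_zero, neg_zero, add_zero] at h1
  have h2 : harnackC n * ((1 + 1 / harnackC n) * |u x| + -|u x|) = |u x| := by
    field_simp; ring
  rw [h2] at h1
  have h3 : 0 < 1 / harnackC n * |u x| := by positivity
  linarith

/-- Near the zero set, `|v|` is bounded below by a power of the distance to the zero set. -/
lemma exists_pow_infDist_le {n : ℕ} {v : En n → ℝ} (hv : HarmonicOnSet v (ball 0 1))
    (hnc : ¬ ∃ c : ℝ, ∀ x ∈ ball (0 : En n) 1, v x = c) :
    ∃ N : ℕ, N ≠ 0 ∧ ∃ K > 0, ∀ x ∈ ball (0 : En n) (1 / 2),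
      infDist x (zeroSet v (ball 0 1)) ≤ 1 / 4 →
        infDist x (zeroSet v (ball 0 1)) ^ N ≤ K * |v x| := by
  obtain ⟨Λ, hΛ, hdb⟩ := exists_doubling hv hnc
  obtain ⟨m, hm, hlow⟩ := exists_lower_bound hv hnc (show (0 : ℝ) < 1 / 512 by norm_num)
  obtain ⟨N₀, hN₀⟩ := pow_unbounded_of_one_lt Λ (show (1 : ℝ) < 16 by norm_num)
  have hC := two_le_harnackC n
  have hN : Λ ≤ 16 ^ (N₀ + 1) :=
    hN₀.le.trans (pow_le_pow_right₀ (by norm_num) (Nat.le_succ _))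
  refine ⟨N₀ + 1, Nat.succ_ne_zero _, harnackC n / m, by positivity, fun x hx hd => ?_⟩
  set d := infDist x (zeroSet v (ball 0 1)) with hdd
  have hd0 : 0 ≤ d := infDist_nonneg
  rcases hd0.eq_or_lt with h0 | h0
  · rw [← h0, zero_pow (Nat.succ_ne_zero _)]; positivity
  have key : ∀ k : ℕ, ∀ r S, 0 < r → 1 / 512 ≤ 16 ^ k * r → (∀ y ∈ ball x r, |v y| ≤ S) →
      m ≤ Λ ^ k * S := by
    intro k
    induction k with
    | zero =>
      intro r S hr h1 hS
      obtain ⟨p, hp, hpm⟩ := hlow x hx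
      simpa using hpm.trans (hS p (ball_subset_ball (by linarith) hp))
    | succ k ih =>
      intro r S hr h1 hS
      have hS0 : 0 ≤ S := (abs_nonneg _).trans (hS x (mem_ball_self hr))
      rcases le_or_gt r (1 / 512) with h | h
      · have := ih (16 * r) (Λ * S) (by positivity) (by rw [pow_succ] at h1; linarith)
          (hdb x hx r S hr h hS)
        rwa [pow_succ, mul_assoc]
      · obtain ⟨p, hp, hpm⟩ := hlow x hx
        refine (hpm.trans (hS p (ball_subset_ball h.le hp))).trans (le_mul_of_one_le_left hS0 ?_)
        exact one_le_pow₀ hΛ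
  obtain ⟨k, hk1, hk2⟩ : ∃ k : ℕ, 1 ≤ 16 ^ k * (32 * d) ∧ 16 ^ k * (2 * d) ≤ 1 := by
    rcases le_or_gt 1 (32 * d) with h | h
    · exact ⟨0, by linarith, by linarith⟩
    · obtain ⟨j, hj1, hj2⟩ := exists_nat_pow_near (x := 1 / (32 * d)) (y := (16 : ℝ))
        (by rw [le_div_iff₀ (by positivity)]; linarith) (by norm_num)
      rw [le_div_iff₀ (by positivity)] at hj1
      rw [div_lt_iff₀ (by positivity)] at hj2
      exact ⟨j + 1, hj2.le, by rw [pow_succ]; linarith⟩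
  rw [mem_ball] at hx
  have hsub : ball x d ⊆ ball 0 1 := ball_subset_ball' (by linarith)
  have hnz : ∀ y ∈ ball x d, v y ≠ 0 := fun y hy => ne_zero_of_dist_lt_infDist (hsub hy) hy
  have h1 := key k (d / 16) (harnackC n * |v x|) (by positivity) (by linarith) fun y hy =>
    (harnack_abs h0 (hv.mono hsub) hnz (mem_ball.1 hy).le).1
  have h2 : d ^ (N₀ + 1) * Λ ^ k ≤ 1 := by
    calc d ^ (N₀ + 1) * Λ ^ k ≤ (2 * d) ^ (N₀ + 1) * (16 ^ (N₀ + 1)) ^ k := by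
          gcongr; linarith
      _ = (16 ^ k * (2 * d)) ^ (N₀ + 1) := by rw [mul_pow (16 ^ k), ← pow_mul, ← pow_mul]; ring
      _ ≤ 1 := pow_le_one₀ (by positivity) hk2
  rw [div_mul_eq_mul_div, le_div_iff₀ hm]
  calc d ^ (N₀ + 1) * m ≤ d ^ (N₀ + 1) * (Λ ^ k * (harnackC n * |v x|)) := by gcongr
    _ = (d ^ (N₀ + 1) * Λ ^ k) * (harnackC n * |v x|) := by ring
    _ ≤ 1 * (harnackC n * |v x|) := by gcongr
    _ = _ := one_mul _

/-- `|v|` on a ball reaching well beyond the zero set is controlled by `|v|` at its center. -/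
lemma exists_abs_le_mul {n : ℕ} {v : En n → ℝ} (hv : HarmonicOnSet v (ball 0 1))
    (hnc : ¬ ∃ c : ℝ, ∀ x ∈ ball (0 : En n) 1, v x = c) :
    ∃ Λ ≥ 1, ∀ x ∈ ball (0 : En n) (1 / 2), 0 < infDist x (zeroSet v (ball 0 1)) →
      infDist x (zeroSet v (ball 0 1)) ≤ 1 / 8192 →
        ∀ y ∈ ball x (64 * infDist x (zeroSet v (ball 0 1))), |v y| ≤ Λ * |v x| := by
  obtain ⟨Λ, hΛ, hdb⟩ := exists_doubling hv hnc
  have hC := two_le_harnackC n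
  have hΛ3 : 1 ≤ Λ ^ 3 := one_le_pow₀ hΛ
  refine ⟨Λ ^ 3 * harnackC n, by nlinarith, fun x hx h0 hd y hy => ?_⟩
  have hx' := hx
  set d := infDist x (zeroSet v (ball 0 1)) with hdd
  rw [mem_ball] at hx
  have hsub : ball x d ⊆ ball 0 1 := ball_subset_ball' (by linarith)
  have hnz : ∀ y ∈ ball x d, v y ≠ 0 := fun y hy => ne_zero_of_dist_lt_infDist (hsub hy) hy
  have h1 := hdb x hx' (d / 16) (harnackC n * |v x|) (by positivity) (by linarith) fun y hy =>
    (harnack_abs h0 (hv.mono hsub) hnz (mem_ball.1 hy).le).1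
  have h2 := hdb x hx' _ _ (by positivity) (by linarith) h1
  have h3 := hdb x hx' _ _ (by positivity) (by linarith) h2
  refine (h3 y (ball_subset_ball (by linarith) hy)).trans (le_of_eq (by ring))

/-- Simultaneous growth of `|v|` and control of all harmonic functions with the same zero set. -/
lemma exists_growth_with_control {n : ℕ} {v : En n → ℝ} (hv : HarmonicOnSet v (ball 0 1))
    (hnc : ¬ ∃ c : ℝ, ∀ x ∈ ball (0 : En n) 1, v x = c)
    (hne : (zeroSet v (ball 0 1)).Nonempty) :
    ∃ δ > 0, ∃ C ≥ 1, ∀ u : En n → ℝ, HarmonicOnSet u (ball 0 1) →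
      zeroSet u (ball 0 1) = zeroSet v (ball 0 1) → ∀ x ∈ ball (0 : En n) (1 / 2), v x ≠ 0 →
        infDist x (zeroSet v (ball 0 1)) ≤ 1 / 8192 →
          ∃ y ∈ ball x (16 * infDist x (zeroSet v (ball 0 1))),
            (1 + δ) * |v x| ≤ |v y| ∧ |u x| ≤ C * |u y| := by
  obtain ⟨Λ, hΛ, hgrow⟩ := exists_abs_le_mul hv hnc
  have hC := two_le_harnackC n
  obtain ⟨κ, hκ, hκ1, hsmall⟩ := exists_abs_le_of_zero n (show 0 < 1 / (2 * Λ) by positivity)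
  obtain ⟨V, hV, hVv, hΔ⟩ := hv.exists_extension (r := 7 / 8) (by norm_num) (by norm_num)
  obtain ⟨t, -, htf, hcov⟩ := (isCompact_closedBall (0 : En n) 16).finite_cover_balls
    (show 0 < κ / 32 by positivity)
  have hlog : 0 ≤ Real.log (harnackC n) := Real.log_nonneg (by linarith)
  refine ⟨1 / (28 * (2 * (8 / κ) ^ n)), by positivity,
    Real.exp (htf.toFinset.card * Real.log (harnackC n)), Real.one_le_exp (by positivity),
    fun u hu huv x hx hvx hd => ?_⟩
  have hd0 := infDist_zeroSet_pos hv hne (ball_subset_ball (by norm_num) hx) hvx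
  have hgr := hgrow x hx hd0 hd
  set d := infDist x (zeroSet v (ball 0 1)) with hdd
  have hx' := hx
  rw [mem_ball] at hx
  obtain ⟨z, hz, hxz⟩ := (infDist_lt_iff hne).1 (show infDist x (zeroSet v (ball 0 1)) < 2 * d by
    linarith)
  have ha : 0 < |v x| := abs_pos.2 hvx
  have hκd : κ * d ≤ d := by nlinarith
  have hsub : ∀ {s : ℝ}, s ≤ 64 * d → ball x s ⊆ ball 0 (7 / 8) := fun hs =>
    ball_subset_ball' (by linarith)
  have hsub1 : ball (0 : En n) (7 / 8) ⊆ ball 0 1 := ball_subset_ball (by norm_num)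
  have hlow : ∀ w ∈ zeroSet v (ball 0 1), dist w x < 17 * d → ∀ y ∈ ball w (κ * d),
      |v y| ≤ |v x| / 2 := by
    intro w hw hwx y hy
    have hs : ball w (32 * d) ⊆ ball x (64 * d) := ball_subset_ball' (by linarith)
    refine (hsmall v w (32 * d) (Λ * |v x|) (by positivity)
      (hv.mono ((hs.trans (hsub le_rfl)).trans hsub1)) (fun y hy => hgr y (hs hy)) hw.2 y
      (ball_subset_ball (by nlinarith) hy)).trans (le_of_eq ?_)
    field_simp
  obtain ⟨σ, hσ, hσx⟩ : ∃ σ : ℝ, |σ| = 1 ∧ σ * v x = |v x| := by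
    rcases lt_or_gt_of_ne hvx with h | h
    · exact ⟨-1, by simp, by rw [abs_of_neg h]; ring⟩
    · exact ⟨1, by simp, by rw [abs_of_pos h]; ring⟩
  set G : En n → ℝ := fun y => σ * V y with hGdef
  have hGle : ∀ y ∈ ball (0 : En n) (7 / 8), G y ≤ |v y| := by
    intro y hy
    rw [← hVv y (ball_subset_closedBall hy)]
    calc G y ≤ |σ * V y| := le_abs_self _
      _ = |V y| := by rw [abs_mul, hσ, one_mul]
  have hG : ContDiff ℝ 2 G := contDiff_const.mul hV
  obtain ⟨y, hyD, hy⟩ := exists_growth_on_component hG (x := x) (z := z) (d := d) (τ := κ * d)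
    (a := |v x|) (δ := 1 / (28 * (2 * (8 / κ) ^ n))) hd0 (by positivity) hκd
    (fun y hy => by
      have := hΔ y (hsub (by linarith) hy)
      rw [laplacianAt_comp hV (ψ := fun s => σ * s) (ψ' := fun _ => σ) (ψ'' := fun _ => 0)
        (fun s => by simpa using (hasDerivAt_id s).const_mul σ)
        (fun s => hasDerivAt_const s σ), this]
      simp)
    ha (by rw [hGdef]; simp only; rw [hVv x (ball_subset_closedBall
      (hsub le_rfl (mem_ball_self (by linarith)))), hσx])
    (by rw [dist_comm]; exact hxz)
    (fun y hy => by
      rw [dist_comm] at hxz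
      have hyx : y ∈ ball x (64 * d) := by
        rw [mem_ball] at hy ⊢
        linarith [dist_triangle y z x]
      exact (hGle y (hsub le_rfl hyx)).trans (hlow z hz (by linarith) y hy))
    (by rw [mul_div_mul_right _ _ hd0.ne']; field_simp)
  set D := connectedComponentIn {y ∈ ball x (16 * d) | |v x| / 2 < G y} x with hD
  have hDW : D ⊆ {y ∈ ball x (16 * d) | |v x| / 2 < G y} := connectedComponentIn_subset _ _
  have hyx := (hDW hyD).1
  have hxD : x ∈ D := by
    refine mem_connectedComponentIn ⟨mem_ball_self (by linarith), ?_⟩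
    rw [hGdef]; simp only
    rw [hVv x (ball_subset_closedBall (hsub le_rfl (mem_ball_self (by linarith)))), hσx]
    linarith
  refine ⟨y, hyx, hy.trans (hGle y (hsub (by linarith) hyx)), ?_⟩
  have hball : ∀ p ∈ D, ball p (κ * d) ⊆ ball 0 1 := fun p hp => by
    refine (ball_subset_ball' ?_).trans (((hsub (s := 17 * d) (by linarith))).trans hsub1)
    have := (hDW hp).1
    rw [mem_ball] at this
    linarith
  have hnz : ∀ p ∈ D, ∀ w ∈ ball p (κ * d), u w ≠ 0 := by
    intro p hp w hw huw
    have hwZ : w ∈ zeroSet v (ball 0 1) := huv ▸ ⟨hball p hp hw, huw⟩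
    have hpx := (hDW hp).1
    have h1 := (hDW hp).2
    have h2 := hGle p (hsub (by linarith) hpx)
    rw [mem_ball] at hw hpx
    have h3 := hlow w hwZ (by linarith [dist_triangle w p x]) p (by rwa [mem_ball, dist_comm])
    linarith
  have hκd0 : 0 < κ * d := by positivity
  have hupos : ∀ p ∈ D, 0 < |u p| := fun p hp => abs_pos.2 (hnz p hp p (mem_ball_self hκd0))
  have hDsub : D ⊆ ball 0 1 := fun p hp => hball p hp (mem_ball_self hκd0)
  have hosc := abs_sub_le_of_cover (D := D) (L := fun p => Real.log |u p|)
    isPreconnected_connectedComponentIn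
    ((hu.continuousOn.mono hDsub).abs.log fun p hp => (hupos p hp).ne') htf.toFinset
    (fun i => x + d • i) (r := d * (κ / 32)) (h := Real.log (harnackC n)) ?_ hlog ?_ hxD hyD
  · have h1 := (abs_le.1 hosc).2
    rw [← Real.exp_log (hupos x hxD), ← Real.exp_log (hupos y hyD), ← Real.exp_add]
    exact Real.exp_le_exp.2 (by linarith)
  · intro p hp
    have hpx := (hDW hp).1
    rw [mem_ball, dist_eq_norm] at hpx
    have h1 : d⁻¹ • (p - x) ∈ closedBall (0 : En n) 16 := by
      rw [mem_closedBall, dist_zero_right, norm_smul, norm_inv, Real.norm_of_nonneg hd0.le,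
        inv_mul_le_iff₀ hd0]
      linarith
    obtain ⟨i, hi, hpi⟩ := mem_iUnion₂.1 (hcov h1)
    refine mem_iUnion₂.2 ⟨i, by simpa using hi, ?_⟩
    rw [mem_ball, dist_eq_norm] at hpi ⊢
    have h2 : p - (x + d • i) = d • (d⁻¹ • (p - x) - i) := by
      rw [smul_sub, smul_smul, mul_inv_cancel₀ hd0.ne', one_smul]; abel
    rw [h2, norm_smul, Real.norm_of_nonneg hd0.le]
    exact mul_lt_mul_of_pos_left hpi hd0
  · intro p hp q hq hpq
    have h1 := harnack_abs hκd0 (hu.mono (hball q hq)) (hnz q hq) (p := p) (by linarith)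
    have hp0 := hupos p hp
    have hq0 := hupos q hq
    have h2 := Real.log_le_log hp0 h1.1
    have h3 := Real.log_le_log hq0 h1.2
    rw [Real.log_mul (by positivity) (by positivity)] at h2 h3
    rw [abs_le]
    constructor <;> linarith

/-- Points along which a bounded quantity grows geometrically must eventually reach a target. -/
lemma exists_of_geometric_growth {X : Type*} {P T : X → Prop} {g : X → ℝ} {B δ : ℝ} (hδ : 0 < δ)
    (hg : ∀ x, P x → 0 < g x ∧ g x ≤ B)
    (step : ∀ x, P x → ¬ T x → ∃ y, P y ∧ (1 + δ) * g x ≤ g y) {x : X} (hx : P x) :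
    ∃ y, P y ∧ T y := by
  by_contra hcon
  push Not at hcon
  have h : ∀ k : ℕ, ∃ y, P y ∧ (1 + δ) ^ k * g x ≤ g y := by
    intro k
    induction k with
    | zero => exact ⟨x, hx, by simp⟩
    | succ k ih =>
      obtain ⟨y, hy, hgy⟩ := ih
      obtain ⟨w, hw, hgw⟩ := step y hy (hcon y hy)
      refine ⟨w, hw, le_trans ?_ hgw⟩
      rw [pow_succ', mul_assoc]
      gcongr
  obtain ⟨k, hk⟩ := pow_unbounded_of_one_lt (B / g x) (show 1 < 1 + δ by linarith)
  obtain ⟨y, hy, hgy⟩ := h k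
  rw [div_lt_iff₀ (hg x hx).1] at hk
  linarith [(hg y hy).2]

lemma le_rpow_inv_of_pow_le {d t : ℝ} {N : ℕ} (hd : 0 ≤ d) (hN : N ≠ 0) (h : d ^ N ≤ t) :
    d ≤ t ^ ((N : ℝ)⁻¹) := by
  rw [← Real.pow_rpow_inv_natCast hd hN]
  exact Real.rpow_le_rpow (by positivity) h (by positivity)

lemma bddAbove_abs_image {n : ℕ} {u : En n → ℝ} (hu : HarmonicOnSet u (ball 0 1))
    {s : Set (En n)} (hs : s ⊆ ball 0 (1 / 2)) : BddAbove ((fun y => |u y|) '' s) := by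
  obtain ⟨S, -, hS⟩ := hu.exists_bound (show (1 / 2 : ℝ) < 1 by norm_num)
  refine ⟨S, ?_⟩
  rintro _ ⟨y, hy, rfl⟩
  exact hS y (ball_subset_closedBall (hs hy))

/-- A weighted bound for all harmonic functions with the same zero set as `v`. -/
lemma exists_abs_mul_pow_le {n : ℕ} {v : En n → ℝ} (hv : HarmonicOnSet v (ball 0 1))
    (hnc : ¬ ∃ c : ℝ, ∀ x ∈ ball (0 : En n) 1, v x = c)
    (hne : (zeroSet v (ball 0 1)).Nonempty) :
    ∃ β : ℕ, β ≠ 0 ∧ ∃ A > 0, ∃ c > 0, c ≤ 1 / 8192 ∧ ∀ u : En n → ℝ,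
      HarmonicOnSet u (ball 0 1) → zeroSet u (ball 0 1) = zeroSet v (ball 0 1) →
        ∀ x ∈ ball (0 : En n) (1 / 4), |u x| * |v x| ^ β ≤ A * sSup ((fun y => |u y|) ''
          {y ∈ ball (0 : En n) (1 / 2) | c ≤ infDist y (zeroSet v (ball 0 1))}) := by
  obtain ⟨δ, hδ, C, hC, hstep⟩ := exists_growth_with_control hv hnc hne
  obtain ⟨N, hN, K, hK, hloj⟩ := exists_pow_infDist_le hv hnc
  obtain ⟨S, hS, hup⟩ := hv.exists_bound (show (7 / 8 : ℝ) < 1 by norm_num)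
  obtain ⟨β₀, hβ₀⟩ := pow_unbounded_of_one_lt C (show 1 < 1 + δ by linarith)
  have hβ : C ≤ (1 + δ) ^ (β₀ + 1) :=
    hβ₀.le.trans (pow_le_pow_right₀ (by linarith) (Nat.le_succ _))
  set α : ℝ := (N : ℝ)⁻¹ with hα
  have hα0 : 0 < α := by positivity
  have hq : 1 < (1 + δ) ^ α := Real.one_lt_rpow (by linarith) hα0
  set B : ℝ := 16 * K ^ α / ((1 + δ) ^ α - 1) with hB
  have hB0 : 0 < B := div_pos (by positivity) (by linarith)
  set ε : ℝ := (1 / (8 * B)) ^ N with hε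
  have hε0 : 0 < ε := by positivity
  have hφε : B * ε ^ α = 1 / 8 := by
    rw [hε, hα, Real.pow_rpow_inv_natCast (by positivity) hN]; field_simp
  obtain ⟨κ, hκ, hκ1, hsmall⟩ := exists_abs_le_of_zero n (show 0 < ε / S by positivity)
  refine ⟨β₀ + 1, Nat.succ_ne_zero _, S ^ (β₀ + 1), by positivity, κ / 8192, by positivity,
    by linarith, fun u hu huv x₀ hx₀ => ?_⟩
  set c : ℝ := κ / 8192 with hc
  set d : En n → ℝ := fun y => infDist y (zeroSet v (ball 0 1)) with hd
  set m := sSup ((fun y => |u y|) ''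
    {y ∈ ball (0 : En n) (1 / 2) | c ≤ infDist y (zeroSet v (ball 0 1))}) with hm
  have hm0 : 0 ≤ m := Real.sSup_nonneg (by rintro _ ⟨y, -, rfl⟩; exact abs_nonneg _)
  rcases eq_or_ne (v x₀) 0 with h0 | h0
  · rw [h0, abs_zero, zero_pow (Nat.succ_ne_zero _), mul_zero]; positivity
  have hnear : ∀ y ∈ ball (0 : En n) (1 / 2), d y < c → |v y| ≤ ε := by
    intro y hy hdy
    obtain ⟨z, hz, hyz⟩ := (infDist_lt_iff hne).1 hdy
    rw [mem_ball] at hy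
    have hz0 : dist z 0 ≤ 1 / 2 + c := by
      have := dist_triangle z y 0
      rw [dist_comm z y] at this
      linarith
    have hs : ball z (1 / 4) ⊆ ball (0 : En n) (7 / 8) := ball_subset_ball' (by linarith)
    have := hsmall v z (1 / 4) S (by norm_num)
      (hv.mono (hs.trans (ball_subset_ball (by norm_num))))
      (fun y hy => hup y (ball_subset_closedBall (hs hy))) hz.2 y
      (by rw [mem_ball]; linarith)
    rwa [div_mul_cancel₀ _ hS.ne'] at this
  let P : En n → Prop := fun y => y ∈ ball (0 : En n) (1 / 2) ∧ v y ≠ 0 ∧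
    |u x₀| * |v x₀| ^ (β₀ + 1) ≤ |u y| * |v y| ^ (β₀ + 1) ∧
    (d y < c → dist y 0 ≤ 1 / 4 + B * |v y| ^ α)
  suffices hex : ∃ y, P y ∧ c ≤ d y by
    obtain ⟨y, ⟨hy, -, hyu, -⟩, hyc⟩ := hex
    have h1 : |u y| ≤ m := le_csSup (bddAbove_abs_image hu (sep_subset _ _))
      ⟨y, ⟨hy, hyc⟩, rfl⟩
    have h2 : |v y| ≤ S := hup y (ball_subset_closedBall (ball_subset_ball (by norm_num) hy))
    calc |u x₀| * |v x₀| ^ (β₀ + 1) ≤ |u y| * |v y| ^ (β₀ + 1) := hyu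
      _ ≤ m * S ^ (β₀ + 1) := by gcongr
      _ = _ := mul_comm _ _
  refine exists_of_geometric_growth (g := fun y => |v y|) (B := S) (x := x₀) hδ ?_ ?_ ?_
  · rintro y ⟨hy, hvy, -⟩
    exact ⟨abs_pos.2 hvy, hup y (ball_subset_closedBall (ball_subset_ball (by norm_num) hy))⟩
  · rintro y ⟨hy, hvy, hyu, hyd⟩ hdy
    rw [not_le] at hdy
    have hc1 : c ≤ 1 / 8192 := by linarith
    obtain ⟨w, hw, hvw, huw⟩ := hstep u hu huv y hy hvy (hdy.le.trans hc1)
    have hw' : dist w y < 16 * d y := hw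
    have hyd' := hyd hdy
    have hv0 : 0 < |v y| := abs_pos.2 hvy
    have h1 : d y ≤ K ^ α * |v y| ^ α := by
      rw [← Real.mul_rpow hK.le hv0.le]
      exact le_rpow_inv_of_pow_le infDist_nonneg hN (hloj y hy (hdy.le.trans (by linarith)))
    have h2 : (1 + δ) ^ α * |v y| ^ α ≤ |v w| ^ α := by
      rw [← Real.mul_rpow (by linarith) hv0.le]
      exact Real.rpow_le_rpow (by positivity) hvw hα0.le
    have h3 : 16 * d y ≤ B * |v w| ^ α - B * |v y| ^ α := by
      have e : B * ((1 + δ) ^ α - 1) = 16 * K ^ α := div_mul_cancel₀ _ (by linarith)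
      calc 16 * d y ≤ 16 * K ^ α * |v y| ^ α := by linarith
        _ = B * ((1 + δ) ^ α * |v y| ^ α) - B * |v y| ^ α := by rw [← e]; ring
        _ ≤ _ := by gcongr
    have h4 : dist w 0 < dist y 0 + 16 * d y := by linarith [dist_triangle w y 0]
    have h5 : B * |v y| ^ α ≤ 1 / 8 := by
      rw [← hφε]
      exact mul_le_mul_of_nonneg_left
        (Real.rpow_le_rpow hv0.le (hnear y hy hdy) hα0.le) hB0.le
    have hvw0 : 0 < |v w| := lt_of_lt_of_le (by positivity) hvw
    refine ⟨w, ⟨by rw [mem_ball]; linarith, abs_pos.1 hvw0, hyu.trans ?_, fun _ => by linarith⟩,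
      hvw⟩
    calc |u y| * |v y| ^ (β₀ + 1) ≤ (C * |u w|) * |v y| ^ (β₀ + 1) := by gcongr
      _ ≤ ((1 + δ) ^ (β₀ + 1) * |u w|) * |v y| ^ (β₀ + 1) := by gcongr
      _ = |u w| * ((1 + δ) * |v y|) ^ (β₀ + 1) := by rw [mul_pow]; ring
      _ ≤ |u w| * |v w| ^ (β₀ + 1) := by gcongr
  · refine ⟨ball_subset_ball (by norm_num) hx₀, h0, le_rfl, fun _ => ?_⟩
    rw [mem_ball] at hx₀
    have : 0 ≤ B * |v x₀| ^ α := by positivity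
    linarith

theorem stmt15 (n : ℕ) (v : En n → ℝ)
    (hv : HarmonicOnSet v (ball 0 1))
    (hnc : ¬ ∃ c : ℝ, ∀ x ∈ ball (0 : En n) 1, v x = c)
    (hZ : (zeroSet v (ball 0 1) ∩ ball (0 : En n) (1/2)).Nonempty) :
    ∃ M > (0 : ℝ), ∃ c > (0 : ℝ),
      ∀ u : En n → ℝ, HarmonicOnSet u (ball 0 1) →
        zeroSet u (ball 0 1) = zeroSet v (ball 0 1) →
        ∀ x ∈ ball (0 : En n) (1/16),
          |u x| ≤ M * sSup ((fun y => |u y|) ''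
            {y ∈ ball (0 : En n) (1/2) | c ≤ infDist y (zeroSet v (ball 0 1))}) := by
  have hne : (zeroSet v (ball 0 1)).Nonempty := hZ.mono inter_subset_left
  obtain ⟨β, hβ, A, hA, c, hc, hc1, hmain⟩ := exists_abs_mul_pow_le hv hnc hne
  obtain ⟨N, hN, K, hK, hloj⟩ := exists_pow_infDist_le hv hnc
  have hNβ : N * β ≠ 0 := Nat.mul_ne_zero hN hβ
  have hC := two_le_harnackC n
  set δ : ℝ := 1 / harnackC n with hδ
  have hδ0 : 0 < δ := by positivity
  set γ : ℝ := ((N * β : ℕ) : ℝ)⁻¹ with hγ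
  have hγ0 : 0 < γ := by
    have : 0 < N * β := Nat.pos_of_ne_zero hNβ
    positivity
  set q : ℝ := (1 / (1 + δ)) ^ γ with hq
  have hq1 : q < 1 := Real.rpow_lt_one (by positivity)
    (by rw [div_lt_one (by linarith)]; linarith) hγ0
  set B : ℝ := 34 / (1 - q) with hB
  have hB0 : 0 < B := div_pos (by norm_num) (by linarith)
  set M : ℝ := max 1 (K ^ β * A / (3 / (16 * B)) ^ (N * β)) with hM
  have hM1 : 1 ≤ M := le_max_left _ _
  refine ⟨M, by linarith, c, hc, fun u hu huv x₀ hx₀ => ?_⟩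
  set m := sSup ((fun y => |u y|) ''
    {y ∈ ball (0 : En n) (1 / 2) | c ≤ infDist y (zeroSet v (ball 0 1))}) with hm
  have hm0 : 0 ≤ m := Real.sSup_nonneg (by rintro _ ⟨y, -, rfl⟩; exact abs_nonneg _)
  have hx₀' := hx₀
  rw [mem_ball] at hx₀
  by_contra hcon
  rw [not_le] at hcon
  have hux₀ : 0 < |u x₀| := lt_of_le_of_lt (by positivity) hcon
  have hvx₀ : v x₀ ≠ 0 := by
    intro h
    have h1 : x₀ ∈ zeroSet u (ball 0 1) := huv ▸ ⟨ball_subset_ball (by norm_num) hx₀', h⟩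
    exact abs_pos.1 hux₀ h1.2
  have hmpos : 0 < m := by
    have h1 := hmain u hu huv x₀ (ball_subset_ball (by norm_num) hx₀')
    have h2 : 0 < |u x₀| * |v x₀| ^ β := mul_pos hux₀ (pow_pos (abs_pos.2 hvx₀) _)
    exact pos_of_mul_pos_right (h2.trans_le h1) hA.le
  set Q : ℝ := K ^ β * A * m with hQ
  have hQ0 : 0 < Q := by positivity
  have hx₀B : B * (Q / |u x₀|) ^ γ ≤ 3 / 16 := by
    have h1 : Q / |u x₀| ≤ (3 / (16 * B)) ^ (N * β) := by
      have h2 : K ^ β * A / (3 / (16 * B)) ^ (N * β) ≤ M := le_max_right _ _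
      rw [div_le_iff₀ (by positivity)] at h2
      rw [div_le_iff₀ hux₀, hQ]
      calc K ^ β * A * m ≤ M * (3 / (16 * B)) ^ (N * β) * m := by gcongr
        _ = (3 / (16 * B)) ^ (N * β) * (M * m) := by ring
        _ ≤ _ := by gcongr
    calc B * (Q / |u x₀|) ^ γ ≤ B * ((3 / (16 * B)) ^ (N * β)) ^ γ := by gcongr
      _ = 3 / 16 := by
        rw [hγ, Real.pow_rpow_inv_natCast (by positivity) hNβ]; field_simp
  obtain ⟨S, hS, hup⟩ := hu.exists_bound (show (1 / 2 : ℝ) < 1 by norm_num)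
  have hball : ∀ y, dist y 0 + B * (Q / |u y|) ^ γ ≤ dist x₀ 0 + B * (Q / |u x₀|) ^ γ →
      dist y 0 < 1 / 4 := by
    intro y hy
    have : 0 ≤ B * (Q / |u y|) ^ γ := by positivity
    linarith
  let P : En n → Prop := fun y =>
    dist y 0 + B * (Q / |u y|) ^ γ ≤ dist x₀ 0 + B * (Q / |u x₀|) ^ γ ∧ |u x₀| ≤ |u y|
  suffices hex : ∃ y, P y ∧ False by
    obtain ⟨_, -, h⟩ := hex
    exact h
  refine exists_of_geometric_growth (g := fun y => |u y|) (B := S) hδ0 ?_ ?_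
    (x := x₀) ⟨le_rfl, le_rfl⟩
  · rintro y ⟨hy, huy⟩
    exact ⟨hux₀.trans_le huy, hup y (by rw [mem_closedBall]; linarith [hball y hy])⟩
  · rintro y ⟨hy, huy⟩ -
    have hy4 := hball y hy
    have hy2 : y ∈ ball (0 : En n) (1 / 2) := by rw [mem_ball]; linarith
    have huy0 : 0 < |u y| := hux₀.trans_le huy
    have hdc : infDist y (zeroSet v (ball 0 1)) < c := by
      by_contra h
      rw [not_lt] at h
      have h1 : |u y| ≤ m := le_csSup (bddAbove_abs_image hu (sep_subset _ _)) ⟨y, ⟨hy2, h⟩, rfl⟩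
      have h2 : m ≤ M * m := le_mul_of_one_le_left hm0 hM1
      linarith
    obtain ⟨w, hw, huw⟩ := exists_growth hu (huv ▸ hne) hy2 (abs_pos.1 huy0)
      (by rw [huv]; linarith)
    rw [huv, mem_ball] at hw
    set d := infDist y (zeroSet v (ball 0 1)) with hd
    have hd0 : 0 ≤ d := infDist_nonneg
    have h1 : d ^ (N * β) ≤ Q / |u y| := by
      rw [le_div_iff₀ huy0, pow_mul]
      calc (d ^ N) ^ β * |u y| ≤ (K * |v y|) ^ β * |u y| := by
            gcongr
            exact hloj y hy2 (by linarith)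
        _ = K ^ β * (|u y| * |v y| ^ β) := by rw [mul_pow]; ring
        _ ≤ K ^ β * (A * m) :=
            mul_le_mul_of_nonneg_left (hmain u hu huv y (mem_ball.2 hy4)) (by positivity)
        _ = Q := by rw [hQ]; ring
    have h2 : d ≤ (Q / |u y|) ^ γ := le_rpow_inv_of_pow_le hd0 hNβ h1
    have h3 : (Q / |u w|) ^ γ ≤ q * (Q / |u y|) ^ γ := by
      rw [hq, ← Real.mul_rpow (by positivity) (by positivity), one_div_mul_eq_div, div_div]
      refine Real.rpow_le_rpow (by positivity) ?_ hγ0.le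
      rw [mul_comm]
      exact div_le_div_of_nonneg_left hQ0.le (by positivity) huw
    have h4 : 34 * (Q / |u y|) ^ γ = B * (Q / |u y|) ^ γ - B * (q * (Q / |u y|) ^ γ) := by
      have e : B * (1 - q) = 34 := div_mul_cancel₀ _ (by linarith)
      rw [← e]; ring
    have h5 : B * (Q / |u w|) ^ γ ≤ B * (q * (Q / |u y|) ^ γ) :=
      mul_le_mul_of_nonneg_left h3 hB0.le
    refine ⟨w, ⟨?_, huy.trans (le_trans ?_ huw)⟩, huw⟩
    · linarith [dist_triangle w y 0]
    · nlinarith
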